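/- Let (Δ_1,…,Δ_d) be pairwise disjoint closed intervals and (μ_1,…,μ_d) positive compactly supported Borel measures with μ_i ∈ Sz(Δ_i) for each i. Then there exists a unique collection of functions (S_1,…,S_d) such that each S_i is a conjugate-symmetric outer function in the Hardy space H²(D_{Δ_i}) with S_i(∞) > 0, and for almost every x ∈ Δ_i and each i ∈ {1,…,d}: |S_{i±}(x)|² · ∏_{j≠i} S_j(x) = v_{Δ_i}(x), where S_{i±} denote the non-tangential boundary values of S_i from above and below Δ_i. -/

import Mathlib

open MeasureTheory Set Filter Topology Polynomial

noncomputable section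

/-- The arcsine distribution `dω_[a,b](x) = dx/(π √((x−a)(b−x)))` on `[a,b]`. -/
def arcsineMeasure (a b : ℝ) : Measure ℝ :=
  (volume.restrict (Set.Icc a b)).withDensity
    fun x => ENNReal.ofReal (1 / (Real.pi * Real.sqrt ((x - a) * (b - x))))

/-- The branch of `√((z−a)(z−b))` holomorphic off `[a,b]` with `w(z) = z + O(1)` at `∞`. -/
def wBranch (a b : ℝ) (z : ℂ) : ℂ :=
  (z - a) * Complex.exp ((1 / 2 : ℂ) * Complex.log ((z - b) / (z - a)))

/-- Cauchy transform `∫ u(x)/(z−x) dω_[a,b](x)`. -/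
def cauchyT (a b : ℝ) (u : ℝ → ℝ) (z : ℂ) : ℂ :=
  ∫ x, (u x : ℂ) / (z - (x : ℂ)) ∂(arcsineMeasure a b)

/-- `H_Δ u`, the harmonic extension of `u` off `Δ = [a,b]`. -/
def harmExt (a b : ℝ) (u : ℝ → ℝ) (z : ℂ) : ℝ :=
  (wBranch a b z * cauchyT a b u z).re

/-- The outer function `Ω_Δ(f,z) := exp( w_Δ(z) ∫ log f(x)/(z−x) dω_Δ(x) )`. -/
def OmegaFun (a b : ℝ) (f : ℝ → ℝ) (z : ℂ) : ℂ :=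
  Complex.exp (wBranch a b z * cauchyT a b (fun x => Real.log (f x)) z)

/-- The value of `Ω_Δ(f,·)` at infinity: `exp( ∫ log f dω_Δ )`. -/
def OmegaInf (a b : ℝ) (f : ℝ → ℝ) : ℝ :=
  Real.exp (∫ x, Real.log (f x) ∂(arcsineMeasure a b))

/-- Radon–Nikodym derivative `μ′` of `μ` with respect to Lebesgue measure. -/
def lebDeriv (μ : Measure ℝ) (x : ℝ) : ℝ := (μ.rnDeriv volume x).toReal

/-- `v_Δ(x) = π μ′(x) √((x−a)(b−x))`, the density of `μ|_Δ` w.r.t. the arcsine law. -/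
def vDens (μ : Measure ℝ) (a b : ℝ) (x : ℝ) : ℝ :=
  Real.pi * lebDeriv μ x * Real.sqrt ((x - a) * (b - x))

/-- Szegő function `G(e^h μ|_[a,b], z)`. -/
def szegoG (μ : Measure ℝ) (a b : ℝ) (h : ℝ → ℝ) (z : ℂ) : ℂ :=
  OmegaFun a b (fun x => Real.sqrt (Real.exp (h x) * vDens μ a b x)) z

/-- Szegő function `G(e^h μ|_[a,b], ·)` at infinity. -/
def szegoGInf (μ : Measure ℝ) (a b : ℝ) (h : ℝ → ℝ) : ℝ :=
  OmegaInf a b fun x => Real.sqrt (Real.exp (h x) * vDens μ a b x)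

/-- Support of a measure on `ℝ`. -/
def msupp (μ : Measure ℝ) : Set ℝ := {x | ∀ ε > 0, 0 < μ (Metric.ball x ε)}

def suppInf (μ : Measure ℝ) : ℝ := sInf (msupp μ)
def suppSup (μ : Measure ℝ) : ℝ := sSup (msupp μ)

/-- `Δ(μ)`, the convex hull of the support of `μ`. -/
def convHullSupp (μ : Measure ℝ) : Set ℝ := Set.Icc (suppInf μ) (suppSup μ)

/-- Logarithmic potential `V^ω(x) = −∫ log|x−t| dω(t)`. -/
def logPot (ω : Measure ℝ) (x : ℝ) : ℝ := -∫ t, Real.log |x - t| ∂ω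

/-- The Szegő condition `μ ∈ Sz([a,b])`. -/
def SzCond (μ : Measure ℝ) (a b : ℝ) : Prop :=
  Integrable (fun x => Real.log (lebDeriv μ x)) (arcsineMeasure a b)

/-- The increasing affine map of `[a,b]` onto `[c,d]`. -/
def affIcc (a b c d : ℝ) (x : ℝ) : ℝ := c + ((d - c) / (b - a)) * (x - a)

/-- The uniform Szegő condition `μ ∈ USz([a,b])`. -/
def USzCond (μ : Measure ℝ) (a b : ℝ) : Prop :=
  SzCond μ a b ∧
  ∀ A B : ℕ → ℝ, (∀ n, A n < B n) → (∀ n, Set.Icc (A n) (B n) ⊆ convHullSupp μ) →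
    Tendsto A atTop (𝓝 a) → Tendsto B atTop (𝓝 b) →
    (∀ᶠ n in atTop, SzCond μ (A n) (B n)) ∧
    Tendsto (fun n => ∫ x,
        |Real.log (lebDeriv μ x) - Real.log (lebDeriv μ (affIcc a b (A n) (B n) x))|
          ∂(arcsineMeasure a b)) atTop (𝓝 0)

/-- `P` is the `n`-th monic orthogonal polynomial with respect to `ν`. -/
def IsMonicOP (ν : Measure ℝ) (n : ℕ) (P : Polynomial ℝ) : Prop :=
  P.Monic ∧ P.natDegree = n ∧ ∀ k < n, ∫ x, x ^ k * P.eval x ∂ν = 0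

/-- The weighted measure `e^θ μ`. -/
def expWt (μ : Measure ℝ) (θ : ℝ → ℝ) : Measure ℝ :=
  μ.withDensity fun x => ENNReal.ofReal (Real.exp (θ x))

/-- An Angelesco system of `d` measures, with `Δ(μ_i) = [lo i, hi i]`. -/
structure Angelesco (d : ℕ) (μ : Fin d → Measure ℝ) (lo hi : Fin d → ℝ) : Prop where
  two_le : 2 ≤ d
  bounded : ∀ i, Bornology.IsBounded (msupp (μ i))
  infinite : ∀ i, (msupp (μ i)).Infinite
  lo_eq : ∀ i, lo i = suppInf (μ i)
  hi_eq : ∀ i, hi i = suppSup (μ i)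
  sep : ∀ i j, i < j → hi i < lo j

/-- The vector equilibrium measure `(ω_1,…,ω_d)` with parameter `c`,
with `supp ω_i = [A i, B i] ⊆ [lo i, hi i]` and masses `c i`. -/
structure VecEquil (d : ℕ) (lo hi : Fin d → ℝ) (c : Fin d → ℝ)
    (ω : Fin d → Measure ℝ) (A B : Fin d → ℝ) : Prop where
  endpoints : ∀ i, lo i ≤ A i ∧ A i < B i ∧ B i ≤ hi i
  supp : ∀ i, msupp (ω i) = Set.Icc (A i) (B i)
  mass : ∀ i, ω i Set.univ = ENNReal.ofReal (c i)
  equil : ∀ j, ∃ ℓ : ℝ,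
    (∀ x ∈ Set.Icc (A j) (B j), logPot (ω j) x + ∑ i, logPot (ω i) x = ℓ) ∧
    (∀ x ∈ Set.Icc (lo j) (hi j) \ Set.Icc (A j) (B j),
        ℓ < logPot (ω j) x + ∑ i, logPot (ω i) x)

/-- The vector `(S_1,…,S_d)` of conjugate-symmetric outer functions in `H²(D_{Δ_i})`,
positive at infinity, with boundary moduli `g_i` satisfying
`|S_{i±}|² ∏_{j≠i} S_j = v_i` a.e. on `Δ_i` (outer functions positive at infinity are
recovered from their boundary moduli by `S_i = Ω_{Δ_i}(g_i, ·)`). -/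
def IsSzegoVector (d : ℕ) (A B : Fin d → ℝ) (v : Fin d → ℝ → ℝ)
    (g : Fin d → ℝ → ℝ) (S : Fin d → ℂ → ℂ) : Prop :=
  (∀ i x, 0 ≤ g i x) ∧
  (∀ i, Integrable (fun x => Real.log (g i x)) (arcsineMeasure (A i) (B i))) ∧
  (∀ i, S i = fun z => OmegaFun (A i) (B i) (g i) z) ∧
  (∀ i, ∀ᵐ x ∂(arcsineMeasure (A i) (B i)),
    (g i x) ^ 2 * ∏ j ∈ Finset.univ.erase i, (S j (x : ℂ)).re = v i x)

/-- The operator `ℋ` with component `i` equal to `−(1/2) Σ_{j≠i} H_{[A j, B j]} u_j`. -/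
def calH (d : ℕ) (A B : Fin d → ℝ) (u : Fin d → ℝ → ℝ) (i : Fin d) (x : ℝ) : ℝ :=
  -(1 / 2) * ∑ j ∈ Finset.univ.erase i, harmExt (A j) (B j) (u j) (x : ℂ)

/-- sup norm over `[a,b]`. -/
def supIcc (a b : ℝ) (f : ℝ → ℝ) : ℝ := sSup ((fun x => |f x|) '' Set.Icc a b)

/-- Norm of `C(Δ⃗)`. -/
def vecCNorm (d : ℕ) (A B : Fin d → ℝ) (u : Fin d → ℝ → ℝ) : ℝ :=
  ∑ i, supIcc (A i) (B i) (u i)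

/-- Norm of `C¹(Δ⃗)`. -/
def vecC1Norm (d : ℕ) (A B : Fin d → ℝ) (u : Fin d → ℝ → ℝ) : ℝ :=
  ∑ i, (supIcc (A i) (B i) (u i) +
    supIcc (A i) (B i) (derivWithin (u i) (Set.Icc (A i) (B i))))

/-- membership in `C(Δ⃗)`. -/
def memVecC (d : ℕ) (A B : Fin d → ℝ) (u : Fin d → ℝ → ℝ) : Prop :=
  ∀ i, ContinuousOn (u i) (Set.Icc (A i) (B i))

/-- membership in `C¹(Δ⃗)`. -/
def memVecC1 (d : ℕ) (A B : Fin d → ℝ) (u : Fin d → ℝ → ℝ) : Prop :=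
  ∀ i, ContDiffOn ℝ 1 (u i) (Set.Icc (A i) (B i))

/-- `|w_Δ(x)|` for real `x`. -/
def wAbs (p q x : ℝ) : ℝ := Real.sqrt |(x - p) * (x - q)|

/-- Riemann–Liouville type fractional integral of order 1/2. -/
def fracInt (γ : ℝ) (θ : ℝ → ℝ) (x : ℝ) : ℝ :=
  (Real.sqrt Real.pi)⁻¹ * ∫ t in γ..x, θ t / Real.sqrt |x - t|

/-!
Taking logarithms of the boundary moduli `g i` turns the boundary conditions into the fixed-point
system `log g_i = θ_i (½ log v_i - ½ ∑_{j ≠ i} H_j (log g_j))`, where `H_j` is the harmonic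
extension off `Δ_j = [A j, B j]` and `θ_i` is the indicator of `{v_i ≠ 0}`. On `Δ_i` the functions
`H_j u`, `j ≠ i`, are evaluated away from their slits, so Arzelà–Ascoli makes the coupling a compact
operator on continuous functions, and by the Fredholm alternative existence reduces to uniqueness
for the homogeneous system.

Let `u` solve the homogeneous system and let `M` be the maximum over all `Δ_k` of the rest
potentials `∑_{j ≠ k} H_j (u_j)^±`. The equation `u_k = -½ θ_k ∑_{j ≠ k} H_j u_j` bounds `(u_k)^±`
by half of `M` minus the rest potential, so by the maximum principle on the cut Riemann sphere the
total potential of `u^±` is at most `M`. Where a rest potential equals `M`, the strong maximum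
principle freezes the total potential at `M`; the factor `½` then forces `u^±` to vanish on every
interval, and `M = 0`.
-/

open scoped Real

/-! ### The arcsine law -/

section ArcsineLaw

/-- The substitution `x = a cos² φ + b sin² φ`, `0 < φ < π/2`, which turns the arcsine law of
`[a, b]` into the uniform law of `(0, π/2)`. -/
def arcsineParam (a b φ : ℝ) : ℝ := a * Real.cos φ ^ 2 + b * Real.sin φ ^ 2

variable {a b : ℝ}

lemma arcsineParam_sub_left (a b φ : ℝ) : arcsineParam a b φ - a = (b - a) * Real.sin φ ^ 2 := by
  rw [arcsineParam, Real.cos_sq']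
  ring

lemma sub_arcsineParam_right (a b φ : ℝ) : b - arcsineParam a b φ = (b - a) * Real.cos φ ^ 2 := by
  rw [arcsineParam, Real.sin_sq]
  ring

@[fun_prop]
lemma continuous_arcsineParam (a b : ℝ) : Continuous (arcsineParam a b) := by
  unfold arcsineParam
  fun_prop

lemma hasDerivAt_arcsineParam (a b φ : ℝ) :
    HasDerivAt (arcsineParam a b) (2 * (b - a) * Real.sin φ * Real.cos φ) φ := by
  refine (((Real.hasDerivAt_cos φ).pow 2).const_mul a |>.add
    (((Real.hasDerivAt_sin φ).pow 2).const_mul b)).congr_deriv ?_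
  simp only [Nat.cast_ofNat, Nat.add_one_sub_one, pow_one]
  ring

lemma sin_pos_of_mem_Ioo_half_pi {φ : ℝ} (hφ : φ ∈ Ioo 0 (π / 2)) : 0 < Real.sin φ :=
  Real.sin_pos_of_pos_of_lt_pi hφ.1 (by linarith [hφ.2, Real.pi_pos])

lemma cos_pos_of_mem_Ioo_half_pi {φ : ℝ} (hφ : φ ∈ Ioo 0 (π / 2)) : 0 < Real.cos φ :=
  Real.cos_pos_of_mem_Ioo ⟨by linarith [hφ.1, Real.pi_pos], hφ.2⟩

lemma strictMonoOn_arcsineParam (hab : a < b) :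
    StrictMonoOn (arcsineParam a b) (Icc 0 (π / 2)) := by
  refine strictMonoOn_of_deriv_pos (convex_Icc _ _) (by fun_prop) fun φ hφ => ?_
  rw [interior_Icc] at hφ
  rw [(hasDerivAt_arcsineParam a b φ).deriv]
  have := sin_pos_of_mem_Ioo_half_pi hφ
  have := cos_pos_of_mem_Ioo_half_pi hφ
  have := sub_pos.2 hab
  positivity

lemma arcsineParam_image_Ioo (hab : a < b) :
    arcsineParam a b '' Ioo 0 (π / 2) = Ioo a b := by
  have h0 : (0 : ℝ) ≤ π / 2 := by positivity
  have hleft : arcsineParam a b 0 = a := by simp [arcsineParam]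
  have hright : arcsineParam a b (π / 2) = b := by simp [arcsineParam]
  refine Subset.antisymm ?_ ?_
  · rintro _ ⟨φ, hφ, rfl⟩
    have hmono := strictMonoOn_arcsineParam hab
    have hφ' := Ioo_subset_Icc_self hφ
    exact ⟨hleft.symm.trans_lt (hmono (left_mem_Icc.2 h0) hφ' hφ.1),
      (hmono hφ' (right_mem_Icc.2 h0) hφ.2).trans_eq hright⟩
  · simpa only [hleft, hright] using
      intermediate_value_Ioo h0 (continuous_arcsineParam a b).continuousOn

lemma abs_deriv_arcsineParam_mul_density (hab : a < b) {φ : ℝ} (hφ : φ ∈ Ioo 0 (π / 2)) :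
    |2 * (b - a) * Real.sin φ * Real.cos φ| *
      (1 / (π * √((arcsineParam a b φ - a) * (b - arcsineParam a b φ)))) = 2 / π := by
  have hs := sin_pos_of_mem_Ioo_half_pi hφ
  have hc := cos_pos_of_mem_Ioo_half_pi hφ
  have hab' := sub_pos.2 hab
  have hsq : (arcsineParam a b φ - a) * (b - arcsineParam a b φ) =
      ((b - a) * Real.sin φ * Real.cos φ) ^ 2 := by
    rw [arcsineParam_sub_left, sub_arcsineParam_right]
    ring
  rw [hsq, Real.sqrt_sq (by positivity), abs_of_pos (by positivity)]
  field_simp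

theorem arcsineMeasure_eq_map (hab : a < b) :
    arcsineMeasure a b = (ENNReal.ofReal (2 / π) • volume.restrict (Ioo 0 (π / 2))).map
      (arcsineParam a b) := by
  ext s hs
  have hT : Measurable (arcsineParam a b) := (continuous_arcsineParam a b).measurable
  rw [arcsineMeasure, withDensity_apply _ hs, ← lintegral_indicator hs,
    setLIntegral_congr Ioo_ae_eq_Icc.symm, ← arcsineParam_image_Ioo hab,
    lintegral_image_eq_lintegral_abs_deriv_mul measurableSet_Ioo
      (fun φ _ => (hasDerivAt_arcsineParam a b φ).hasDerivWithinAt)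
      ((strictMonoOn_arcsineParam hab).injOn.mono Ioo_subset_Icc_self),
    Measure.map_apply hT hs, ← lintegral_indicator_one (hT hs), lintegral_smul_measure, smul_eq_mul,
    ← lintegral_const_mul _ (measurable_one.indicator (hT hs))]
  refine setLIntegral_congr_fun measurableSet_Ioo fun φ hφ => ?_
  by_cases hφs : arcsineParam a b φ ∈ s
  · simp only [indicator_of_mem hφs, indicator_of_mem (mem_preimage.2 hφs), Pi.one_apply, mul_one]
    rw [← ENNReal.ofReal_mul (abs_nonneg _), abs_deriv_arcsineParam_mul_density hab hφ]
  · simp only [indicator_of_notMem hφs, indicator_of_notMem (mt mem_preimage.1 hφs), mul_zero]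

lemma isProbabilityMeasure_arcsineMeasure (hab : a < b) :
    IsProbabilityMeasure (arcsineMeasure a b) := by
  rw [arcsineMeasure_eq_map hab]
  refine ⟨?_⟩
  rw [Measure.map_apply (continuous_arcsineParam a b).measurable MeasurableSet.univ, preimage_univ,
    Measure.smul_apply, Measure.restrict_apply_univ, Real.volume_Ioo, smul_eq_mul,
    ← ENNReal.ofReal_mul (by positivity), ENNReal.ofReal_eq_one]
  field_simp
  ring

instance isFiniteMeasure_arcsineMeasure (a b : ℝ) : IsFiniteMeasure (arcsineMeasure a b) := by
  rcases lt_or_ge a b with hab | hab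
  · have := isProbabilityMeasure_arcsineMeasure hab
    infer_instance
  · have hnull : volume (Icc a b) = 0 := by simp [Real.volume_Icc, hab]
    rw [arcsineMeasure, Measure.restrict_eq_zero.2 hnull, withDensity_zero_left]
    infer_instance

lemma integral_arcsineMeasure {E : Type*} [NormedAddCommGroup E] [NormedSpace ℝ E] (hab : a < b)
    {f : ℝ → E} (hf : AEStronglyMeasurable f (arcsineMeasure a b)) :
    ∫ x, f x ∂arcsineMeasure a b =
      (2 / π) • ∫ φ in Ioo 0 (π / 2), f (arcsineParam a b φ) := by
  rw [arcsineMeasure_eq_map hab] at hf ⊢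
  rw [integral_map (continuous_arcsineParam a b).aemeasurable hf, integral_smul_measure,
    ENNReal.toReal_ofReal (by positivity)]

lemma ae_mem_Icc_arcsineMeasure (a b : ℝ) : ∀ᵐ t ∂arcsineMeasure a b, t ∈ Icc a b :=
  (withDensity_absolutelyContinuous _ _).ae_le (ae_restrict_mem measurableSet_Icc)

lemma integrable_arcsineMeasure_of_continuousOn {E : Type*} [NormedAddCommGroup E]
    {f : ℝ → E} (hf : ContinuousOn f (Icc a b)) : Integrable f (arcsineMeasure a b) := by
  rw [← Measure.restrict_eq_self_of_ae_mem (ae_mem_Icc_arcsineMeasure a b)]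
  exact hf.integrableOn_compact isCompact_Icc

lemma integrable_log_sub_mul_sub (hab : a < b) :
    Integrable (fun t => Real.log ((t - a) * (b - t))) (arcsineMeasure a b) := by
  have hmeas : Measurable fun t : ℝ => Real.log ((t - a) * (b - t)) := by measurability
  rw [arcsineMeasure_eq_map hab, integrable_map_measure hmeas.aestronglyMeasurable (by fun_prop)]
  refine Integrable.smul_measure ?_ ENNReal.ofReal_ne_top
  have hsin : IntegrableOn (fun φ => Real.log (Real.sin φ)) (Ioo 0 (π / 2)) :=
    (intervalIntegrable_log_sin (a := 0) (b := π / 2)).1.mono_set Ioo_subset_Ioc_self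
  have hcos : IntegrableOn (fun φ => Real.log (Real.cos φ)) (Ioo 0 (π / 2)) :=
    (intervalIntegrable_log_cos (a := 0) (b := π / 2)).1.mono_set Ioo_subset_Ioc_self
  have hconst : IntegrableOn (fun _ : ℝ => 2 * Real.log (b - a)) (Ioo 0 (π / 2)) :=
    integrableOn_const (by simp)
  refine ((hconst.add (hsin.const_mul 2)).add (hcos.const_mul 2)).congr_fun (fun φ hφ => ?_)
    measurableSet_Ioo
  have hs := sin_pos_of_mem_Ioo_half_pi hφ
  have hc := cos_pos_of_mem_Ioo_half_pi hφ
  have hab' := sub_pos.2 hab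
  simp only [Function.comp_apply, Pi.add_apply]
  rw [arcsineParam_sub_left, sub_arcsineParam_right, Real.log_mul (by positivity) (by positivity),
    Real.log_mul hab'.ne' (by positivity), Real.log_mul hab'.ne' (by positivity), Real.log_pow,
    Real.log_pow]
  push_cast
  ring

end ArcsineLaw

/-! ### The kernel of a slit -/

section SlitKernel

/-- The interval `[a, b]` regarded as a subset of the complex plane. -/
def slit (a b : ℝ) : Set ℂ := Complex.ofReal '' Icc a b

/-- The branch of `√((z - b)/(z - a))` with positive real part off `[a, b]`. -/
def sqrtRatio (a b : ℝ) (z : ℂ) : ℂ := Complex.exp ((1 / 2 : ℂ) * Complex.log ((z - b) / (z - a)))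

/-- The kernel `w(z)/(z - t)` whose real part is the Poisson kernel of the complement of `[a, b]`,
with respect to the arcsine law. -/
def slitKernel (a b : ℝ) (z : ℂ) (t : ℝ) : ℂ := wBranch a b z / (z - t)

variable {a b : ℝ} {z : ℂ}

lemma isCompact_slit (a b : ℝ) : IsCompact (slit a b) :=
  isCompact_Icc.image Complex.continuous_ofReal

lemma isOpen_compl_slit (a b : ℝ) : IsOpen (slit a b)ᶜ :=
  (isCompact_slit a b).isClosed.isOpen_compl

lemma ofReal_mem_slit {x : ℝ} : (x : ℂ) ∈ slit a b ↔ x ∈ Icc a b :=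
  Complex.ofReal_injective.mem_set_image

lemma sub_ofReal_ne_zero_of_notMem_slit (hz : z ∉ slit a b) {t : ℝ} (ht : t ∈ Icc a b) :
    z - t ≠ 0 := by
  rintro h
  exact hz (sub_eq_zero.1 h ▸ mem_image_of_mem _ ht)

lemma exp_half_mul_log_re_pos {r : ℂ} (hr : r ∈ Complex.slitPlane) :
    0 < (Complex.exp ((1 / 2 : ℂ) * Complex.log r)).re := by
  have him : ((1 / 2 : ℂ) * Complex.log r).im = Complex.arg r / 2 := by
    simp [Complex.log_im]
    ring
  rw [Complex.exp_re, him]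
  have hlt := Complex.neg_pi_lt_arg r
  have hgt := (Complex.arg_le_pi r).lt_of_ne (Complex.mem_slitPlane_iff_arg.1 hr).1
  exact mul_pos (Real.exp_pos _) (Real.cos_pos_of_mem_Ioo ⟨by linarith, by linarith⟩)

lemma ratio_mem_slitPlane (hab : a < b) (hz : z ∉ slit a b) :
    (z - b) / (z - a) ∈ Complex.slitPlane := by
  have hza := sub_ofReal_ne_zero_of_notMem_slit hz (left_mem_Icc.2 hab.le)
  by_contra hneg
  rw [Complex.mem_slitPlane_iff, not_or, not_lt, not_not] at hneg
  set r : ℝ := ((z - b) / (z - a)).re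
  have hr : (z - b) / (z - a) = r := Complex.ext rfl hneg.2
  have hr1 : 0 < 1 - r := by linarith [hneg.1]
  have hz_eq : z = ((b - r * a) / (1 - r) : ℝ) := by
    push_cast
    rw [eq_div_iff (by exact_mod_cast hr1.ne')]
    linear_combination (div_eq_iff hza).1 hr
  refine hz ⟨_, ⟨?_, ?_⟩, hz_eq.symm⟩
  · rw [le_div_iff₀ hr1]
    nlinarith [hneg.1]
  · rw [div_le_iff₀ hr1]
    nlinarith [hneg.1]

lemma sqrtRatio_re_pos (hab : a < b) (hz : z ∉ slit a b) : 0 < (sqrtRatio a b z).re :=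
  exp_half_mul_log_re_pos (ratio_mem_slitPlane hab hz)

lemma sqrtRatio_ne_zero (a b : ℝ) (z : ℂ) : sqrtRatio a b z ≠ 0 :=
  Complex.exp_ne_zero _

lemma sqrtRatio_sq (hab : a < b) (hz : z ∉ slit a b) :
    sqrtRatio a b z ^ 2 = (z - b) / (z - a) := by
  rw [sqrtRatio, ← Complex.exp_nat_mul, Nat.cast_ofNat, ← mul_assoc, mul_one_div_cancel two_ne_zero,
    one_mul, Complex.exp_log (Complex.slitPlane_ne_zero (ratio_mem_slitPlane hab hz))]

lemma wBranch_eq_mul_sqrtRatio (a b : ℝ) (z : ℂ) : wBranch a b z = (z - a) * sqrtRatio a b z :=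
  rfl

lemma wBranch_sq (hab : a < b) (hz : z ∉ slit a b) : wBranch a b z ^ 2 = (z - a) * (z - b) := by
  have hza := sub_ofReal_ne_zero_of_notMem_slit hz (left_mem_Icc.2 hab.le)
  rw [wBranch_eq_mul_sqrtRatio, mul_pow, sqrtRatio_sq hab hz]
  field_simp

lemma differentiableOn_wBranch (hab : a < b) : DifferentiableOn ℂ (wBranch a b) (slit a b)ᶜ := by
  intro z hz
  have hratio : DifferentiableAt ℂ (fun z : ℂ => (z - b) / (z - a)) z :=
    DifferentiableAt.div (by fun_prop) (by fun_prop)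
      (sub_ofReal_ne_zero_of_notMem_slit hz (left_mem_Icc.2 hab.le))
  have hsub : DifferentiableAt ℂ (fun z : ℂ => z - a) z := by fun_prop
  exact (hsub.mul ((hratio.clog (ratio_mem_slitPlane hab hz)).const_mul
    (1 / 2 : ℂ)).cexp).differentiableWithinAt

/-- In terms of `ρ = √((z - b)/(z - a))`, the inverse kernel is a convex combination of `ρ⁻¹` and
`ρ`; this is where the positivity of the kernel comes from. -/
lemma inv_slitKernel (hab : a < b) (hz : z ∉ slit a b) (t : ℝ) :
    (slitKernel a b z t)⁻¹ = ((b - t) / (b - a) : ℝ) * (sqrtRatio a b z)⁻¹ +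
      ((t - a) / (b - a) : ℝ) * sqrtRatio a b z := by
  have hza := sub_ofReal_ne_zero_of_notMem_slit hz (left_mem_Icc.2 hab.le)
  have hρ := sqrtRatio_ne_zero a b z
  have hba : (b - a : ℂ) ≠ 0 := by exact_mod_cast (sub_pos.2 hab).ne'
  have hsq : (z - a) * sqrtRatio a b z ^ 2 = z - b := by
    rw [sqrtRatio_sq hab hz, mul_div_cancel₀ _ hza]
  rw [slitKernel, wBranch_eq_mul_sqrtRatio, inv_div]
  push_cast
  field_simp
  linear_combination (a - t) * hsq

lemma re_inv_pos {w : ℂ} (hw : 0 < w.re) : 0 < w⁻¹.re := by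
  rw [Complex.inv_re]
  exact div_pos hw (Complex.normSq_pos.2 fun h => by simp [h] at hw)

lemma slitKernel_re_pos (hab : a < b) (hz : z ∉ slit a b) {t : ℝ} (ht : t ∈ Icc a b) :
    0 < (slitKernel a b z t).re := by
  have hab' := sub_pos.2 hab
  have hsum : (b - t) / (b - a) + (t - a) / (b - a) = 1 := by
    field_simp
    ring
  have hρ := sqrtRatio_re_pos hab hz
  rw [← inv_inv (slitKernel a b z t)]
  refine re_inv_pos ?_
  rw [inv_slitKernel hab hz, Complex.add_re, Complex.re_ofReal_mul, Complex.re_ofReal_mul]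
  exact convex_Ioi (0 : ℝ) (re_inv_pos hρ) hρ (div_nonneg (sub_nonneg.2 ht.2) hab'.le)
    (div_nonneg (sub_nonneg.2 ht.1) hab'.le) hsum

lemma continuousAt_slitKernel (hab : a < b) (hz : z ∉ slit a b) {t : ℝ} (ht : t ∈ Icc a b) :
    ContinuousAt (fun p : ℂ × ℝ => slitKernel a b p.1 p.2) (z, t) := by
  have hw : ContinuousAt (wBranch a b) z :=
    ((differentiableOn_wBranch hab).continuousOn).continuousAt ((isOpen_compl_slit a b).mem_nhds hz)
  have hsub : Continuous fun p : ℂ × ℝ => p.1 - (p.2 : ℂ) := by fun_prop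
  exact ContinuousAt.div (f := fun p : ℂ × ℝ => wBranch a b p.1)
    (hw.comp_of_eq continuousAt_fst rfl) hsub.continuousAt (sub_ofReal_ne_zero_of_notMem_slit hz ht)

lemma continuousOn_slitKernel (hab : a < b) (hz : z ∉ slit a b) :
    ContinuousOn (slitKernel a b z) (Icc a b) := fun _ ht =>
  ((continuousAt_slitKernel hab hz ht).comp
    (Continuous.prodMk_right z).continuousAt).continuousWithinAt

end SlitKernel

section KernelIntegral

variable {c : ℂ}

lemma cos_add_mul_sin_mem_slitPlane (hc : c.im ≠ 0) {φ : ℝ} (hφ : φ ∈ Icc 0 (π / 2)) :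
    (Real.cos φ + c * Real.sin φ : ℂ) ∈ Complex.slitPlane := by
  rw [Complex.mem_slitPlane_iff]
  rcases hφ.1.eq_or_lt with rfl | h0
  · simp
  · have hsin := Real.sin_pos_of_pos_of_lt_pi h0 (by linarith [hφ.2, Real.pi_pos])
    right
    rw [Complex.add_im, Complex.im_mul_ofReal, Complex.ofReal_im, zero_add]
    exact mul_ne_zero hc hsin.ne'

lemma intervalIntegrable_div_cos_add_mul_sin (hc : c.im ≠ 0) :
    IntervalIntegrable (fun φ : ℝ => (c * Real.cos φ - Real.sin φ) / (Real.cos φ + c * Real.sin φ))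
      volume 0 (π / 2) := by
  refine ContinuousOn.intervalIntegrable (ContinuousOn.div (by fun_prop) (by fun_prop) ?_)
  intro φ hφ
  rw [uIcc_of_le (by positivity)] at hφ
  exact Complex.slitPlane_ne_zero (cos_add_mul_sin_mem_slitPlane hc hφ)

lemma integral_div_cos_add_mul_sin (hc : c.im ≠ 0) :
    ∫ φ : ℝ in 0..π / 2, (c * Real.cos φ - Real.sin φ) / (Real.cos φ + c * Real.sin φ) =
      Complex.log c := by
  have hderiv : ∀ φ ∈ uIcc 0 (π / 2), HasDerivAt
      (fun φ : ℝ => Complex.log (Real.cos φ + c * Real.sin φ))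
      ((c * Real.cos φ - Real.sin φ) / (Real.cos φ + c * Real.sin φ)) φ := by
    intro φ hφ
    rw [uIcc_of_le (by positivity)] at hφ
    refine (((Real.hasDerivAt_cos φ).ofReal_comp.fun_add
      ((Real.hasDerivAt_sin φ).ofReal_comp.const_mul c)).clog_real
        (cos_add_mul_sin_mem_slitPlane hc hφ)).congr_deriv ?_
    push_cast
    ring
  rw [intervalIntegral.integral_eq_sub_of_hasDerivAt hderiv
    (intervalIntegrable_div_cos_add_mul_sin hc)]
  simp

lemma integral_div_cos_sq_add_mul_sin_sq {ρ : ℂ} (hρ : 0 < ρ.re) :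
    ∫ φ : ℝ in 0..π / 2, ρ / (Real.cos φ ^ 2 + ρ ^ 2 * Real.sin φ ^ 2) = π / 2 := by
  set c := Complex.I * ρ
  have him : 0 < c.im := by simpa [c] using hρ
  have him' : (-c).im ≠ 0 := by simpa using him.ne'
  have hsplit : EqOn (fun φ : ℝ => ρ / (Real.cos φ ^ 2 + ρ ^ 2 * Real.sin φ ^ 2 : ℂ))
      (fun φ : ℝ => (1 / (2 * Complex.I)) *
        ((c * Real.cos φ - Real.sin φ) / (Real.cos φ + c * Real.sin φ) -
          (-c * Real.cos φ - Real.sin φ) / (Real.cos φ + -c * Real.sin φ))) (uIcc 0 (π / 2)) := by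
    intro φ hφ
    rw [uIcc_of_le (by positivity)] at hφ
    have hne := Complex.slitPlane_ne_zero (cos_add_mul_sin_mem_slitPlane him.ne' hφ)
    have hne' := Complex.slitPlane_ne_zero (cos_add_mul_sin_mem_slitPlane him' hφ)
    have hfac : (Real.cos φ ^ 2 + ρ ^ 2 * Real.sin φ ^ 2 : ℂ) =
        (Real.cos φ + c * Real.sin φ) * (Real.cos φ + -c * Real.sin φ) := by
      linear_combination (ρ ^ 2 * (Real.sin φ : ℂ) ^ 2) * Complex.I_sq
    have hcs : (Real.cos φ ^ 2 : ℂ) = 1 - Real.sin φ ^ 2 := by exact_mod_cast Real.cos_sq' φ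
    simp only
    rw [hfac, div_sub_div _ _ hne hne', ← mul_div_assoc]
    congr 1
    field_simp
    linear_combination -(2 * c) * hcs
  have hlog : Complex.log (-c) = Complex.log c - π * Complex.I := by
    rw [Complex.log, Complex.log, norm_neg, Complex.arg_neg_eq_arg_sub_pi_of_im_pos him]
    push_cast
    ring
  rw [intervalIntegral.integral_congr hsplit, intervalIntegral.integral_const_mul,
    intervalIntegral.integral_sub (intervalIntegrable_div_cos_add_mul_sin him.ne')
      (intervalIntegrable_div_cos_add_mul_sin him'), integral_div_cos_add_mul_sin him.ne',
    integral_div_cos_add_mul_sin him', hlog]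
  field_simp
  ring

theorem integral_slitKernel {a b : ℝ} (hab : a < b) {z : ℂ} (hz : z ∉ slit a b) :
    ∫ t, slitKernel a b z t ∂arcsineMeasure a b = 1 := by
  have hkernel (φ : ℝ) : slitKernel a b z (arcsineParam a b φ) =
      sqrtRatio a b z / (Real.cos φ ^ 2 + sqrtRatio a b z ^ 2 * Real.sin φ ^ 2) := by
    have hab' := (sub_pos.2 hab).ne'
    have hρ := sqrtRatio_ne_zero a b z
    rw [← inv_inv (slitKernel _ _ _ _), inv_slitKernel hab hz, sub_arcsineParam_right,
      arcsineParam_sub_left, mul_div_cancel_left₀ _ hab', mul_div_cancel_left₀ _ hab', ← inv_div]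
    push_cast
    field_simp
  rw [integral_arcsineMeasure hab (integrable_arcsineMeasure_of_continuousOn
      (continuousOn_slitKernel hab hz)).aestronglyMeasurable]
  simp_rw [hkernel]
  rw [← integral_Ioc_eq_integral_Ioo, ← intervalIntegral.integral_of_le (by positivity),
    integral_div_cos_sq_add_mul_sin_sq (sqrtRatio_re_pos hab hz), Complex.real_smul]
  push_cast
  field_simp

end KernelIntegral

/-! ### The Schwarz integral and the harmonic extension -/

section SchwarzIntegral

/-- The Schwarz integral `w(z) ∫ u(t)/(z - t) dω(t)` of `u` for the complement of `[a, b]`. It is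
the holomorphic function with real part `harmExt a b u`, and `OmegaFun a b f` is the exponential of
the Schwarz integral of `log f`. -/
def schwarzIntegral (a b : ℝ) (u : ℝ → ℝ) (z : ℂ) : ℂ := wBranch a b z * cauchyT a b u z

variable {a b : ℝ} {u v : ℝ → ℝ} {z : ℂ}

lemma harmExt_eq_re (a b : ℝ) (u : ℝ → ℝ) (z : ℂ) :
    harmExt a b u z = (schwarzIntegral a b u z).re :=
  rfl

lemma OmegaFun_eq_exp (a b : ℝ) (f : ℝ → ℝ) (z : ℂ) :
    OmegaFun a b f z = Complex.exp (schwarzIntegral a b (fun t => Real.log (f t)) z) :=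
  rfl

lemma schwarzIntegral_eq_integral (a b : ℝ) (u : ℝ → ℝ) (z : ℂ) :
    schwarzIntegral a b u z = ∫ t, u t * slitKernel a b z t ∂arcsineMeasure a b := by
  rw [schwarzIntegral, cauchyT, ← integral_const_mul]
  exact integral_congr_ae (ae_of_all _ fun t => mul_div_left_comm _ _ _)

lemma schwarzIntegral_congr (huv : u =ᵐ[arcsineMeasure a b] v) (z : ℂ) :
    schwarzIntegral a b u z = schwarzIntegral a b v z := by
  rw [schwarzIntegral_eq_integral, schwarzIntegral_eq_integral]
  exact integral_congr_ae (huv.mono fun t ht => by simp only [ht])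

lemma aestronglyMeasurable_of_continuousOn_Icc {E : Type*} [NormedAddCommGroup E]
    {f : ℝ → E} (hf : ContinuousOn f (Icc a b)) : AEStronglyMeasurable f (arcsineMeasure a b) :=
  (integrable_arcsineMeasure_of_continuousOn hf).aestronglyMeasurable

lemma integrable_mul_slitKernel (hab : a < b) (hu : Integrable u (arcsineMeasure a b))
    (hz : z ∉ slit a b) :
    Integrable (fun t => u t * slitKernel a b z t : ℝ → ℂ) (arcsineMeasure a b) := by
  have hcont := continuousOn_slitKernel hab hz
  obtain ⟨C, hC⟩ := isCompact_Icc.exists_bound_of_continuousOn hcont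
  exact hu.ofReal.mul_bdd (aestronglyMeasurable_of_continuousOn_Icc hcont)
    ((ae_mem_Icc_arcsineMeasure a b).mono hC)

lemma harmExt_eq_integral (hab : a < b) (hu : Integrable u (arcsineMeasure a b))
    (hz : z ∉ slit a b) :
    harmExt a b u z = ∫ t, u t * (slitKernel a b z t).re ∂arcsineMeasure a b := by
  rw [harmExt_eq_re, schwarzIntegral_eq_integral, ← RCLike.re_eq_complex_re,
    ← integral_re (integrable_mul_slitKernel hab hu hz)]
  simp

lemma integrable_mul_re_slitKernel (hab : a < b) (hu : Integrable u (arcsineMeasure a b))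
    (hz : z ∉ slit a b) :
    Integrable (fun t => u t * (slitKernel a b z t).re) (arcsineMeasure a b) := by
  simpa using (integrable_mul_slitKernel hab hu hz).re

lemma harmExt_mono (hab : a < b) (hu : Integrable u (arcsineMeasure a b))
    (hv : Integrable v (arcsineMeasure a b)) (huv : u ≤ᵐ[arcsineMeasure a b] v)
    (hz : z ∉ slit a b) : harmExt a b u z ≤ harmExt a b v z := by
  rw [harmExt_eq_integral hab hu hz, harmExt_eq_integral hab hv hz]
  refine integral_mono_ae (integrable_mul_re_slitKernel hab hu hz)
    (integrable_mul_re_slitKernel hab hv hz) ?_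
  filter_upwards [ae_mem_Icc_arcsineMeasure a b, huv] with t ht hle
  exact mul_le_mul_of_nonneg_right hle (slitKernel_re_pos hab hz ht).le

lemma harmExt_add (hab : a < b) (hu : Integrable u (arcsineMeasure a b))
    (hv : Integrable v (arcsineMeasure a b)) (hz : z ∉ slit a b) :
    harmExt a b (u + v) z = harmExt a b u z + harmExt a b v z := by
  rw [harmExt_eq_integral hab hu hz, harmExt_eq_integral hab hv hz,
    harmExt_eq_integral hab (hu.add hv) hz,
    ← integral_add (integrable_mul_re_slitKernel hab hu hz)
      (integrable_mul_re_slitKernel hab hv hz)]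
  simp only [Pi.add_apply, add_mul]

lemma harmExt_smul (a b c : ℝ) (u : ℝ → ℝ) (z : ℂ) :
    harmExt a b (c • u) z = c * harmExt a b u z := by
  rw [harmExt_eq_re, harmExt_eq_re, schwarzIntegral_eq_integral, schwarzIntegral_eq_integral,
    ← Complex.re_ofReal_mul, ← integral_const_mul]
  simp only [Pi.smul_apply, smul_eq_mul, Complex.ofReal_mul, mul_assoc]

lemma harmExt_sub (hab : a < b) (hu : Integrable u (arcsineMeasure a b))
    (hv : Integrable v (arcsineMeasure a b)) (hz : z ∉ slit a b) :
    harmExt a b (u - v) z = harmExt a b u z - harmExt a b v z := by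
  rw [sub_eq_add_neg, ← neg_one_smul ℝ v, harmExt_add hab hu (hv.smul _) hz, harmExt_smul]
  ring

lemma harmExt_const (hab : a < b) (c : ℝ) (hz : z ∉ slit a b) :
    harmExt a b (fun _ => c) z = c := by
  rw [harmExt_eq_re, schwarzIntegral_eq_integral, integral_const_mul, integral_slitKernel hab hz,
    mul_one, Complex.ofReal_re]

lemma harmExt_congr (huv : u =ᵐ[arcsineMeasure a b] v) (z : ℂ) :
    harmExt a b u z = harmExt a b v z := by
  rw [harmExt_eq_re, harmExt_eq_re, schwarzIntegral_congr huv]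

lemma harmExt_nonneg (hab : a < b) (hu : Integrable u (arcsineMeasure a b))
    (h0 : 0 ≤ᵐ[arcsineMeasure a b] u) (hz : z ∉ slit a b) : 0 ≤ harmExt a b u z :=
  (harmExt_const hab 0 hz).symm.trans_le (harmExt_mono hab (integrable_const 0) hu h0 hz)

lemma abs_harmExt_le (hab : a < b) (hu : Integrable u (arcsineMeasure a b)) {C : ℝ}
    (hC : ∀ᵐ t ∂arcsineMeasure a b, |u t| ≤ C) (hz : z ∉ slit a b) :
    |harmExt a b u z| ≤ C := by
  refine abs_le.2 ⟨?_, ?_⟩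
  · rw [← harmExt_const hab (-C) hz]
    exact harmExt_mono hab (integrable_const _) hu (hC.mono fun t ht => (abs_le.1 ht).1) hz
  · rw [← harmExt_const hab C hz]
    exact harmExt_mono hab hu (integrable_const _) (hC.mono fun t ht => (abs_le.1 ht).2) hz

lemma differentiableOn_cauchyT (hu : Integrable u (arcsineMeasure a b)) :
    DifferentiableOn ℂ (cauchyT a b u) (slit a b)ᶜ := by
  intro z hz
  obtain ⟨ε, hε, hball⟩ := Metric.isOpen_iff.1 (isOpen_compl_slit a b) z hz
  have hfar : ∀ y ∈ Metric.ball z (ε / 2), ∀ t ∈ Icc a b, ε / 2 ≤ ‖y - t‖ := by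
    intro y hy t ht
    have hzt : ε ≤ dist (t : ℂ) z := not_lt.1 fun h => hball h (mem_image_of_mem _ ht)
    rw [← dist_eq_norm, dist_comm]
    linarith [dist_triangle (t : ℂ) y z, Metric.mem_ball.1 hy]
  have hmeas (y : ℂ) (n : ℕ) :
      AEStronglyMeasurable (fun t => (u t : ℂ) / (y - t) ^ n) (arcsineMeasure a b) := by
    simp only [div_eq_mul_inv]
    exact hu.ofReal.aestronglyMeasurable.mul (by fun_prop)
  have hz2 : z ∈ Metric.ball z (ε / 2) := Metric.mem_ball_self (half_pos hε)
  have hmem := ae_mem_Icc_arcsineMeasure a b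
  refine (hasDerivAt_integral_of_dominated_loc_of_deriv_le (𝕜 := ℂ)
    (F := fun y t => (u t : ℂ) / (y - t)) (F' := fun y t => -((u t : ℂ) / (y - t) ^ 2))
    (bound := fun t => |u t| / (ε / 2) ^ 2)
    (Metric.ball_mem_nhds z (half_pos hε)) (.of_forall fun y => by simpa using hmeas y 1)
    ?_ (hmeas z 2).neg ?_ (hu.abs.div_const _)
    ?_).2.differentiableAt.differentiableWithinAt
  · refine (hu.abs.div_const (ε / 2)).mono' (by simpa using hmeas z 1) (hmem.mono fun t ht => ?_)
    rw [norm_div, Complex.norm_real, Real.norm_eq_abs]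
    exact div_le_div_of_nonneg_left (abs_nonneg _) (half_pos hε) (hfar z hz2 t ht)
  · filter_upwards [hmem] with t ht y hy
    rw [norm_neg, norm_div, norm_pow, Complex.norm_real, Real.norm_eq_abs]
    gcongr
    exact hfar y hy t ht
  · filter_upwards [hmem] with t ht y hy
    have hne : y - t ≠ 0 := norm_pos_iff.1 ((half_pos hε).trans_le (hfar y hy t ht))
    refine ((((hasDerivAt_id y).sub_const (t : ℂ)).inv hne).const_mul (u t : ℂ)).congr_deriv ?_
    simp
    ring

lemma differentiableOn_schwarzIntegral (hab : a < b) (hu : Integrable u (arcsineMeasure a b)) :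
    DifferentiableOn ℂ (schwarzIntegral a b u) (slit a b)ᶜ :=
  (differentiableOn_wBranch hab).mul (differentiableOn_cauchyT hu)

lemma continuousAt_harmExt (hab : a < b) (hu : Integrable u (arcsineMeasure a b))
    (hz : z ∉ slit a b) : ContinuousAt (harmExt a b u) z :=
  Complex.continuous_re.continuousAt.comp <|
    (differentiableOn_schwarzIntegral hab hu).continuousOn.continuousAt
      ((isOpen_compl_slit a b).mem_nhds hz)

lemma eventually_norm_slitKernel_le (hab : a < b) :
    ∀ᶠ z in Bornology.cobounded ℂ, ∀ t ∈ Icc a b, ‖slitKernel a b z t‖ ≤ 3 := by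
  set R := max |a| |b|
  have hR : ∀ t ∈ Icc a b, ‖(t : ℂ)‖ ≤ R := fun t ht => by
    rw [Complex.norm_real]
    exact abs_le_max_abs_abs ht.1 ht.2
  filter_upwards [tendsto_norm_cobounded_atTop.eventually_gt_atTop (2 * R)] with z hzR t ht
  have hR0 : 0 ≤ R := (norm_nonneg _).trans (hR t ht)
  have hz : z ∉ slit a b := by
    rintro ⟨s, hs, rfl⟩
    linarith [hR s hs]
  have hw : ‖wBranch a b z‖ ≤ ‖z‖ + R := by
    refine le_of_sq_le_sq ?_ (by positivity)
    rw [← norm_pow, wBranch_sq hab hz, norm_mul, sq]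
    gcongr
    · exact (norm_sub_le _ _).trans (by gcongr; exact hR a (left_mem_Icc.2 hab.le))
    · exact (norm_sub_le _ _).trans (by gcongr; exact hR b (right_mem_Icc.2 hab.le))
  have hzt : ‖z‖ - R ≤ ‖z - t‖ := (sub_le_sub_left (hR t ht) _).trans (norm_sub_norm_le _ _)
  rw [slitKernel, norm_div, div_le_iff₀ (by linarith)]
  linarith

lemma isBoundedUnder_norm_schwarzIntegral (hab : a < b) (hu : Integrable u (arcsineMeasure a b)) :
    (Bornology.cobounded ℂ).IsBoundedUnder (· ≤ ·) fun z => ‖schwarzIntegral a b u z‖ := by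
  refine isBoundedUnder_of_eventually_le (a := ∫ t, |u t| * 3 ∂arcsineMeasure a b) ?_
  filter_upwards [eventually_norm_slitKernel_le hab] with z hz
  rw [schwarzIntegral_eq_integral]
  refine norm_integral_le_of_norm_le (hu.abs.mul_const 3) ?_
  filter_upwards [ae_mem_Icc_arcsineMeasure a b] with t ht
  rw [norm_mul, Complex.norm_real, Real.norm_eq_abs]
  exact mul_le_mul_of_nonneg_left (hz t ht) (abs_nonneg _)

lemma eventually_norm_slitKernel_sub_lt (hab : a < b) (hz : z ∉ slit a b) {ε : ℝ} (hε : 0 < ε) :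
    ∀ᶠ y in 𝓝 z, ∀ t ∈ Icc a b, ‖slitKernel a b y t - slitKernel a b z t‖ < ε := by
  refine isCompact_Icc.eventually_forall_of_forall_eventually fun t ht => ?_
  have hcont := continuousAt_slitKernel hab hz ht
  have hcont' : ContinuousAt (fun p : ℂ × ℝ => slitKernel a b z p.2) (z, t) :=
    hcont.comp_of_eq (f := fun p : ℂ × ℝ => (z, p.2)) (by fun_prop) rfl
  have hdiff := (Tendsto.sub hcont hcont').norm
  rw [sub_self, norm_zero] at hdiff
  exact hdiff.eventually_lt_const hε

lemma eventually_abs_harmExt_sub_le (hab : a < b) (hz : z ∉ slit a b) {ε : ℝ} (hε : 0 < ε) :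
    ∀ᶠ y in 𝓝 z, ∀ u, Integrable u (arcsineMeasure a b) →
      |harmExt a b u y - harmExt a b u z| ≤ (∫ t, |u t| ∂arcsineMeasure a b) * ε := by
  filter_upwards [eventually_norm_slitKernel_sub_lt hab hz hε,
    (isOpen_compl_slit a b).mem_nhds hz] with y hy hyz u hu
  have hle : ‖schwarzIntegral a b u y - schwarzIntegral a b u z‖ ≤
      ∫ t, |u t| * ε ∂arcsineMeasure a b := by
    rw [schwarzIntegral_eq_integral, schwarzIntegral_eq_integral,
      ← integral_sub (integrable_mul_slitKernel hab hu hyz) (integrable_mul_slitKernel hab hu hz)]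
    refine norm_integral_le_of_norm_le (hu.abs.mul_const ε) ?_
    filter_upwards [ae_mem_Icc_arcsineMeasure a b] with t ht
    rw [← mul_sub, norm_mul, Complex.norm_real, Real.norm_eq_abs]
    exact mul_le_mul_of_nonneg_left (hy t ht).le (abs_nonneg _)
  rw [integral_mul_const] at hle
  exact (Complex.abs_re_le_norm (schwarzIntegral a b u y - schwarzIntegral a b u z)).trans hle

lemma schwarzIntegral_ofReal (hab : a < b) {x : ℝ} (hx : x ∉ Icc a b) (u : ℝ → ℝ) :
    schwarzIntegral a b u x = (harmExt a b u x : ℝ) := by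
  have hratio : 0 ≤ (x - b) / (x - a) := by
    rw [div_nonneg_iff]
    grind
  have hw : wBranch a b x = ((x - a) * Real.exp (1 / 2 * Real.log ((x - b) / (x - a))) : ℝ) := by
    rw [wBranch]
    push_cast [Complex.ofReal_log hratio]
    rfl
  have hc : cauchyT a b u x = (∫ t, u t / (x - t) ∂arcsineMeasure a b : ℝ) := by
    rw [cauchyT, ← integral_complex_ofReal]
    push_cast
    rfl
  rw [harmExt_eq_re, schwarzIntegral, hw, hc, ← Complex.ofReal_mul, Complex.ofReal_re]

lemma OmegaFun_ofReal (hab : a < b) {x : ℝ} (hx : x ∉ Icc a b) (g : ℝ → ℝ) :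
    OmegaFun a b g x = Real.exp (harmExt a b (fun t => Real.log (g t)) x) := by
  rw [OmegaFun_eq_exp, schwarzIntegral_ofReal hab hx, Complex.ofReal_exp]

end SchwarzIntegral

/-! ### Boundary behaviour -/

section Boundary

variable {a b x : ℝ}

lemma norm_wBranch (hab : a < b) {z : ℂ} (hz : z ∉ slit a b) :
    ‖wBranch a b z‖ = √‖(z - a) * (z - b)‖ := by
  rw [← wBranch_sq hab hz, norm_pow, Real.sqrt_sq (norm_nonneg _)]

lemma re_wBranch_sq (hab : a < b) {z : ℂ} (hz : z ∉ slit a b) :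
    (wBranch a b z).re ^ 2 = (‖(z - a) * (z - b)‖ + ((z - a) * (z - b)).re) / 2 := by
  rw [← wBranch_sq hab hz, norm_pow, Complex.sq_norm, Complex.normSq_apply, sq (wBranch a b z),
    Complex.mul_re]
  ring

lemma tendsto_re_wBranch (hab : a < b) (hx : x ∈ Icc a b) :
    Tendsto (fun z => (wBranch a b z).re) (𝓝[(slit a b)ᶜ] x) (𝓝 0) := by
  have hcont : ContinuousAt
      (fun z : ℂ => (‖(z - a) * (z - b)‖ + ((z - a) * (z - b)).re) / 2) x := by fun_prop
  have hx0 : (x - a) * (x - b) ≤ 0 :=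
    mul_nonpos_of_nonneg_of_nonpos (sub_nonneg.2 hx.1) (sub_nonpos.2 hx.2)
  have hval : (‖((x : ℂ) - a) * (x - b)‖ + (((x : ℂ) - a) * (x - b)).re) / 2 = 0 := by
    rw [← Complex.ofReal_sub, ← Complex.ofReal_sub, ← Complex.ofReal_mul, Complex.norm_real,
      Real.norm_of_nonpos hx0, Complex.ofReal_re, neg_add_cancel, zero_div]
  have hsq : Tendsto (fun z => (wBranch a b z).re ^ 2) (𝓝[(slit a b)ᶜ] x) (𝓝 0) := by
    rw [← hval]
    refine (hcont.tendsto.mono_left nhdsWithin_le_nhds).congr' ?_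
    filter_upwards [self_mem_nhdsWithin] with z hz using (re_wBranch_sq hab hz).symm
  exact squeeze_zero_norm (fun z => (Real.sqrt_sq_eq_abs _).ge) (by simpa using hsq.sqrt)

lemma slitKernel_re_le (a b : ℝ) (z : ℂ) (t : ℝ) {r : ℝ} (hr : 0 < r) (hrz : r ≤ ‖z - t‖) :
    (slitKernel a b z t).re ≤ |(wBranch a b z).re| / r + ‖wBranch a b z‖ * |z.im| / r ^ 2 := by
  have hre : |((z - t)⁻¹).re| ≤ r⁻¹ :=
    (Complex.abs_re_le_norm _).trans (by rw [norm_inv]; exact inv_anti₀ hr hrz)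
  have him : |((z - t)⁻¹).im| ≤ |z.im| / r ^ 2 := by
    rw [Complex.inv_im, Complex.normSq_eq_norm_sq, abs_div, abs_neg, abs_pow, abs_norm]
    simp only [Complex.sub_im, Complex.ofReal_im, sub_zero]
    gcongr
  calc (slitKernel a b z t).re
      = (wBranch a b z).re * ((z - t)⁻¹).re - (wBranch a b z).im * ((z - t)⁻¹).im := by
        rw [slitKernel, div_eq_mul_inv, Complex.mul_re]
    _ ≤ |(wBranch a b z).re| * |((z - t)⁻¹).re| + |(wBranch a b z).im| * |((z - t)⁻¹).im| := by
        rw [← abs_mul, ← abs_mul]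
        exact (le_abs_self _).trans (abs_sub _ _)
    _ ≤ |(wBranch a b z).re| * r⁻¹ + ‖wBranch a b z‖ * (|z.im| / r ^ 2) := by
        gcongr
        exact Complex.abs_im_le_norm _
    _ = _ := by ring

lemma eventually_slitKernel_re_lt (hab : a < b) (hx : x ∈ Icc a b) {δ ε : ℝ} (hδ : 0 < δ)
    (hε : 0 < ε) : ∀ᶠ z in 𝓝[(slit a b)ᶜ] (x : ℂ), ∀ t : ℝ, δ ≤ |t - x| →
      (slitKernel a b z t).re < ε := by
  have hw : Tendsto (fun z : ℂ => ‖wBranch a b z‖ * |z.im|) (𝓝[(slit a b)ᶜ] x) (𝓝 0) := by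
    have hcont : ContinuousAt (fun z : ℂ => √‖(z - a) * (z - b)‖ * |z.im|) x := by fun_prop
    have hlim := hcont.tendsto.mono_left (nhdsWithin_le_nhds (s := (slit a b)ᶜ))
    rw [Complex.ofReal_im, abs_zero, mul_zero] at hlim
    refine hlim.congr' ?_
    filter_upwards [self_mem_nhdsWithin] with z hz
    rw [norm_wBranch hab hz]
  have hbound := ((tendsto_re_wBranch hab hx).abs.div_const (δ / 2)).add
    (hw.div_const ((δ / 2) ^ 2))
  rw [abs_zero, zero_div, zero_div, add_zero] at hbound
  filter_upwards [hbound.eventually_lt_const hε,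
    nhdsWithin_le_nhds (Metric.ball_mem_nhds (x : ℂ) (half_pos hδ))] with z hzε hzx t ht
  refine (slitKernel_re_le a b z t (half_pos hδ) ?_).trans_lt hzε
  have htx : δ ≤ dist (t : ℂ) x := by
    rwa [Complex.dist_eq, ← Complex.ofReal_sub, Complex.norm_real]
  rw [← dist_eq_norm, dist_comm]
  linarith [dist_triangle (t : ℂ) z x, Metric.mem_ball.1 hzx]

variable {f c : ℝ → ℝ}

lemma eventually_harmExt_lt_of_nonpos_near (hab : a < b) (hx : x ∈ Icc a b)
    (hf : Integrable f (arcsineMeasure a b)) {δ ε : ℝ} (hδ : 0 < δ) (hε : 0 < ε)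
    (hneg : ∀ᵐ t ∂arcsineMeasure a b, |t - x| < δ → f t ≤ 0) :
    ∀ᶠ z in 𝓝[(slit a b)ᶜ] (x : ℂ), harmExt a b f z < ε := by
  set m := ∫ t, |f t| ∂arcsineMeasure a b
  have hm : 0 ≤ m := integral_nonneg fun t => abs_nonneg _
  have hη : 0 < ε / (m + 1) := by positivity
  filter_upwards [eventually_slitKernel_re_lt hab hx hδ hη, self_mem_nhdsWithin] with z hK hz
  calc harmExt a b f z = ∫ t, f t * (slitKernel a b z t).re ∂arcsineMeasure a b :=
        harmExt_eq_integral hab hf hz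
    _ ≤ ∫ t, |f t| * (ε / (m + 1)) ∂arcsineMeasure a b := by
        refine integral_mono_ae (integrable_mul_re_slitKernel hab hf hz) (hf.abs.mul_const _) ?_
        filter_upwards [hneg, ae_mem_Icc_arcsineMeasure a b] with t hft ht
        have hpos := (slitKernel_re_pos hab hz ht).le
        rcases lt_or_ge |t - x| δ with hlt | hge
        · exact (mul_nonpos_of_nonpos_of_nonneg (hft hlt) hpos).trans (by positivity)
        · exact mul_le_mul (le_abs_self _) (hK t hge).le hpos (abs_nonneg _)
    _ = m * (ε / (m + 1)) := integral_mul_const _ _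
    _ < (m + 1) * (ε / (m + 1)) := by gcongr; linarith
    _ = ε := by field_simp

theorem eventually_harmExt_lt (hab : a < b) (hx : x ∈ Icc a b)
    (hf : Integrable f (arcsineMeasure a b)) (hfc : f ≤ᵐ[arcsineMeasure a b] c)
    (hc : ContinuousWithinAt c (Icc a b) x) {L : ℝ} (hL : c x < L) :
    ∀ᶠ z in 𝓝[(slit a b)ᶜ] (x : ℂ), harmExt a b f z < L := by
  obtain ⟨L', hcL', hL'⟩ := exists_between hL
  obtain ⟨δ, hδ, hball⟩ :=
    Metric.mem_nhdsWithin_iff.1 (hc.tendsto.eventually_lt_const hcL')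
  have hneg : ∀ᵐ t ∂arcsineMeasure a b, |t - x| < δ → f t - L' ≤ 0 := by
    filter_upwards [hfc, ae_mem_Icc_arcsineMeasure a b] with t htc ht htx
    have hct : c t < L' := hball ⟨Metric.mem_ball.2 htx, ht⟩
    exact sub_nonpos.2 (htc.trans hct.le)
  filter_upwards [eventually_harmExt_lt_of_nonpos_near hab hx (hf.sub (integrable_const L')) hδ
    (sub_pos.2 hL') hneg, self_mem_nhdsWithin] with z hz hzs
  rw [harmExt_sub hab hf (integrable_const L') hzs, harmExt_const hab L' hzs] at hz
  linarith

end Boundary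

/-! ### Maximum principles -/

section MaximumPrinciple

lemma exists_isMaxOn_inter_of_eventually_lt {X : Type*} [TopologicalSpace X] {Ω Q : Set X}
    {φ : X → ℝ} {m : ℝ} (hΩ : IsOpen Ω) (hQ : IsCompact Q) (hφ : ContinuousOn φ Ω)
    (hm : ∀ x ∈ Q \ Ω, ∀ᶠ z in 𝓝[Ω] x, φ z < m) {z₀ : X} (hz₀ : z₀ ∈ Ω ∩ Q) (hz₀m : m ≤ φ z₀) :
    ∃ z₁ ∈ Ω ∩ Q, IsMaxOn φ (Ω ∩ Q) z₁ := by
  classical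
  have husc : UpperSemicontinuousOn (Ω.piecewise (fun z => max (φ z) m) fun _ => m) Q := by
    intro x hxQ y hy
    by_cases hx : x ∈ Ω
    · rw [piecewise_eq_of_mem _ _ _ hx] at hy
      have hcont := (hφ.continuousAt (hΩ.mem_nhds hx)).max (continuousAt_const (y := m))
      filter_upwards [nhdsWithin_le_nhds (hΩ.mem_nhds hx),
        nhdsWithin_le_nhds (hcont.eventually_lt_const hy)] with z hz hzy
      rwa [piecewise_eq_of_mem _ _ _ hz]
    · rw [piecewise_eq_of_notMem _ _ _ hx] at hy
      filter_upwards [nhdsWithin_le_nhds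
        (eventually_nhdsWithin_iff.1 (hm x ⟨hxQ, hx⟩))] with z hz
      by_cases hzΩ : z ∈ Ω
      · rw [piecewise_eq_of_mem _ _ _ hzΩ, max_eq_right (hz hzΩ).le]
        exact hy
      · rwa [piecewise_eq_of_notMem _ _ _ hzΩ]
  obtain ⟨z₁, hz₁Q, hmax⟩ := husc.exists_isMaxOn ⟨z₀, hz₀.2⟩ hQ
  by_cases hz₁ : z₁ ∈ Ω ∧ m ≤ φ z₁
  · refine ⟨z₁, ⟨hz₁.1, hz₁Q⟩, fun z hz => ?_⟩
    have hle := isMaxOn_iff.1 hmax z hz.2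
    rw [piecewise_eq_of_mem _ _ _ hz.1, piecewise_eq_of_mem _ _ _ hz₁.1, max_eq_left hz₁.2] at hle
    exact (le_max_left _ _).trans hle
  · refine ⟨z₀, hz₀, fun z hz => ?_⟩
    have hval : Ω.piecewise (fun z => max (φ z) m) (fun _ => m) z₁ = m := by
      by_cases h : z₁ ∈ Ω
      · rw [piecewise_eq_of_mem _ _ _ h, max_eq_right (not_le.1 fun h' => hz₁ ⟨h, h'⟩).le]
      · rw [piecewise_eq_of_notMem _ _ _ h]
    have hle := isMaxOn_iff.1 hmax z hz.2
    rw [piecewise_eq_of_mem _ _ _ hz.1, hval] at hle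
    exact (le_max_left _ _).trans (hle.trans hz₀m)

lemma norm_le_of_forall_mem_sphere_of_isBoundedUnder {F : ℂ → ℂ} {R C : ℝ} (hR : 0 < R)
    (hF : DifferentiableOn ℂ F (Metric.ball 0 R)ᶜ)
    (hinf : (Bornology.cobounded ℂ).IsBoundedUnder (· ≤ ·) fun z => ‖F z‖)
    (hC : ∀ z, ‖z‖ = R → ‖F z‖ ≤ C) {z : ℂ} (hz : R ≤ ‖z‖) : ‖F z‖ ≤ C := by
  have hR' : 0 < R⁻¹ := inv_pos.2 hR
  have hmaps : MapsTo (fun ζ : ℂ => ζ⁻¹) (Metric.closedBall 0 R⁻¹ \ {0}) (Metric.ball 0 R)ᶜ := by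
    rintro ζ ⟨hζ, hζ0⟩
    rw [mem_closedBall_zero_iff] at hζ
    rw [mem_compl_iff, mem_ball_zero_iff, not_lt, norm_inv]
    exact (le_inv_comm₀ hR (norm_pos_iff.2 hζ0)).2 hζ
  have hd : DifferentiableOn ℂ (fun ζ => F ζ⁻¹) (Metric.closedBall 0 R⁻¹ \ {0}) :=
    hF.comp (fun ζ hζ => (differentiableAt_inv hζ.2).differentiableWithinAt) hmaps
  have hlittle : (fun ζ : ℂ => F ζ⁻¹ - F (0 : ℂ)⁻¹) =o[𝓝[≠] 0] fun ζ => (ζ - 0)⁻¹ := by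
    refine IsBoundedUnder.isLittleO_sub_self_inv ?_
    obtain ⟨K, hK⟩ := hinf.eventually_le
    refine isBoundedUnder_of_eventually_le (a := K + ‖F (0 : ℂ)⁻¹‖) ?_
    filter_upwards [tendsto_inv₀_nhdsNE_zero.eventually hK] with ζ hζ
    exact norm_sub_le_of_le hζ le_rfl
  set G := Function.update (fun ζ => F ζ⁻¹) 0 (limUnder (𝓝[≠] 0) fun ζ => F ζ⁻¹)
  have hG : DifferentiableOn ℂ G (Metric.closedBall 0 R⁻¹) :=
    Complex.differentiableOn_update_limUnder_of_isLittleO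
      (Metric.closedBall_mem_nhds _ hR') hd hlittle
  have hGF {ζ : ℂ} (hζ : ζ ≠ 0) : G ζ = F ζ⁻¹ := Function.update_of_ne hζ _ _
  rw [← closure_ball _ hR'.ne'] at hG
  have hz0 : z ≠ 0 := norm_pos_iff.1 (hR.trans_le hz)
  rw [← inv_inv z, ← hGF (inv_ne_zero hz0)]
  refine Complex.norm_le_of_forall_mem_frontier_norm_le Metric.isBounded_ball hG.diffContOnCl
    (fun ζ hζ => ?_) ?_
  · rw [frontier_ball _ hR'.ne', mem_sphere_zero_iff_norm] at hζ
    rw [hGF (norm_pos_iff.1 (hζ ▸ hR'))]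
    exact hC _ (by rw [norm_inv, hζ, inv_inv])
  · rw [closure_ball _ hR'.ne', mem_closedBall_zero_iff, norm_inv]
    exact inv_anti₀ hR hz

/-- The maximum principle on the Riemann sphere, boundary values being understood as limits
superior. -/
theorem norm_le_of_eventually_norm_lt {Ω : Set ℂ} (hΩ : IsOpen Ω) (hconn : IsPreconnected Ω)
    (hcompact : IsCompact Ωᶜ) (hne : Ωᶜ.Nonempty) {F : ℂ → ℂ} (hF : DifferentiableOn ℂ F Ω)
    (hinf : (Bornology.cobounded ℂ).IsBoundedUnder (· ≤ ·) fun z => ‖F z‖) {M : ℝ}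
    (hbd : ∀ x ∈ Ωᶜ, ∀ M' > M, ∀ᶠ z in 𝓝[Ω] x, ‖F z‖ < M') {z : ℂ} (hz : z ∈ Ω) :
    ‖F z‖ ≤ M := by
  by_contra! hMz
  obtain ⟨R, hR, hsub⟩ := (hcompact.isBounded.union
    (Bornology.isBounded_singleton (x := z))).subset_ball_lt 0 0
  have hzR : z ∈ Metric.closedBall 0 R := Metric.ball_subset_closedBall (hsub (Or.inr rfl))
  obtain ⟨z₁, hz₁, hmax⟩ := exists_isMaxOn_inter_of_eventually_lt hΩ
    (isCompact_closedBall (0 : ℂ) R) hF.continuousOn.norm (fun x hx => hbd x hx.2 _ hMz)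
    ⟨hz, hzR⟩ le_rfl
  have hext : (Metric.ball 0 R)ᶜ ⊆ Ω := by
    rw [compl_subset_comm]
    exact subset_union_left.trans hsub
  have hmaxΩ : IsMaxOn (norm ∘ F) Ω z₁ := by
    intro y hy
    rcases le_total ‖y‖ R with hyR | hyR
    · exact hmax ⟨hy, mem_closedBall_zero_iff.2 hyR⟩
    · refine norm_le_of_forall_mem_sphere_of_isBoundedUnder hR (hF.mono hext) hinf
        (fun w hw => hmax ⟨hext ?_, mem_closedBall_zero_iff.2 hw.le⟩) hyR
      rw [mem_compl_iff, mem_ball_zero_iff, hw]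
      exact lt_irrefl R
  obtain ⟨x, hx⟩ := nonempty_frontier_iff.2 ⟨⟨z, hz⟩, nonempty_compl.1 hne⟩
  have : (𝓝[Ω] x).NeBot := mem_closure_iff_nhdsWithin_neBot.1 (frontier_subset_closure hx)
  have hxΩ : x ∈ Ωᶜ := (hΩ.frontier_eq ▸ hx).2
  obtain ⟨y, hyz, hy⟩ := ((hbd x hxΩ _ hMz).and self_mem_nhdsWithin).exists
  have hconst : ‖F y‖ = ‖F z₁‖ :=
    Complex.norm_eqOn_of_isPreconnected_of_isMaxOn hconn hΩ hF hz₁.1 hmaxΩ hy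
  exact absurd (hmax ⟨hz, hzR⟩) (not_le.2 (hconst ▸ hyz))

theorem re_le_of_eventually_re_lt {Ω : Set ℂ} (hΩ : IsOpen Ω) (hconn : IsPreconnected Ω)
    (hcompact : IsCompact Ωᶜ) (hne : Ωᶜ.Nonempty) {f : ℂ → ℂ} (hf : DifferentiableOn ℂ f Ω)
    (hinf : (Bornology.cobounded ℂ).IsBoundedUnder (· ≤ ·) fun z => (f z).re) {M : ℝ}
    (hbd : ∀ x ∈ Ωᶜ, ∀ M' > M, ∀ᶠ z in 𝓝[Ω] x, (f z).re < M') {z : ℂ} (hz : z ∈ Ω) :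
    (f z).re ≤ M := by
  rw [← Real.exp_le_exp, ← Complex.norm_exp]
  refine norm_le_of_eventually_norm_lt hΩ hconn hcompact hne hf.cexp ?_ (fun x hx M' hM' => ?_) hz
  · obtain ⟨K, hK⟩ := hinf.eventually_le
    refine isBoundedUnder_of_eventually_le (a := Real.exp K) (hK.mono fun w hw => ?_)
    rw [Complex.norm_exp]
    exact Real.exp_le_exp.2 hw
  · have hM'0 : 0 < M' := (Real.exp_pos M).trans hM'
    filter_upwards [hbd x hx _ ((Real.lt_log_iff_exp_lt hM'0).2 hM')] with w hw
    rwa [Complex.norm_exp, ← Real.lt_log_iff_exp_lt hM'0]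

lemma re_eqOn_of_isPreconnected_of_isMaxOn {Ω : Set ℂ} (hΩ : IsOpen Ω) (hconn : IsPreconnected Ω)
    {f : ℂ → ℂ} (hf : DifferentiableOn ℂ f Ω) {c : ℂ} (hc : c ∈ Ω)
    (hmax : IsMaxOn (fun z => (f z).re) Ω c) : EqOn (fun z => (f z).re) (fun _ => (f c).re) Ω := by
  have hexp : IsMaxOn (norm ∘ fun z => Complex.exp (f z)) Ω c := by
    intro z hz
    simp only [Function.comp_apply, Complex.norm_exp, mem_ofPred_eq, Real.exp_le_exp]
    exact hmax hz
  intro z hz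
  have hz := Complex.norm_eqOn_of_isPreconnected_of_isMaxOn hconn hΩ hf.cexp hc hexp hz
  simpa only [Function.comp_apply, Function.const_apply, Complex.norm_exp, Real.exp_eq_exp] using hz

end MaximumPrinciple

section RealSlits

variable {E : Set ℝ} {z : ℂ}

lemma segment_subset_compl_ofReal_image {c : ℝ} (hc : c ∉ E) (hz : z.im ≠ 0) :
    segment ℝ z (c : ℂ) ⊆ (Complex.ofReal '' E)ᶜ := by
  rintro _ ⟨s, t, -, -, hst, rfl⟩ ⟨y, hy, h⟩
  have him := congrArg Complex.im h
  simp only [Complex.ofReal_im, Complex.add_im, Complex.smul_im, smul_eq_mul, mul_zero, add_zero,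
    zero_eq_mul, hz, or_false] at him
  obtain rfl : t = 1 := by linarith
  have hyc : y = c := by simpa [him] using h
  exact hc (hyc ▸ hy)

lemma isPreconnected_compl_ofReal_image (hE : E ≠ univ) :
    IsPreconnected (Complex.ofReal '' E)ᶜ := by
  obtain ⟨c, hc⟩ := (ne_univ_iff_exists_notMem E).1 hE
  have hseg (z w : ℂ) : IsPreconnected (segment ℝ z w) := (convex_segment z w).isPreconnected
  refine isPreconnected_of_forall (c : ℂ) fun z hz => ?_
  by_cases him : z.im = 0
  · obtain ⟨x, rfl⟩ : ∃ x : ℝ, (x : ℂ) = z := ⟨z.re, Complex.ext rfl him.symm⟩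
    have hxE : x ∉ E := fun hx => hz (mem_image_of_mem _ hx)
    have hI : (x + Complex.I : ℂ).im ≠ 0 := by simp
    exact ⟨segment ℝ (x + Complex.I) x ∪ segment ℝ (x + Complex.I) c,
      union_subset (segment_subset_compl_ofReal_image hxE hI)
        (segment_subset_compl_ofReal_image hc hI),
      Or.inr (right_mem_segment _ _ _), Or.inl (right_mem_segment _ _ _),
      (hseg _ _).union _ (left_mem_segment _ _ _) (left_mem_segment _ _ _) (hseg _ _)⟩
  · exact ⟨_, segment_subset_compl_ofReal_image hc him, right_mem_segment _ _ _,
      left_mem_segment _ _ _, hseg _ _⟩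

lemma nhdsWithin_compl_ofReal_image_neBot (E : Set ℝ) (x : ℝ) :
    (𝓝[(Complex.ofReal '' E)ᶜ] (x : ℂ)).NeBot := by
  rw [← mem_closure_iff_nhdsWithin_neBot]
  have hx : (x : ℂ) ∈ closure {z : ℂ | 0 < z.im} := by
    rw [Complex.closure_setOfPred_lt_im]
    simp
  refine closure_mono ?_ hx
  rintro z hz ⟨y, -, rfl⟩
  simp at hz

end RealSlits

section SlitSystem

variable {ι : Type*} {A B : ι → ℝ} {J : Finset ι} {f u v : ι → ℝ → ℝ} {z : ℂ}

/-- The union of the intervals `Δ_j = [A j, B j]`, `j ∈ J`, as a subset of `ℂ`. -/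
def slits (A B : ι → ℝ) (J : Finset ι) : Set ℂ := ⋃ j ∈ J, slit (A j) (B j)

/-- The sum over `j ∈ J` of the harmonic extensions of `u j` off `Δ_j = [A j, B j]`. -/
def multiExt (A B : ι → ℝ) (J : Finset ι) (u : ι → ℝ → ℝ) (z : ℂ) : ℝ :=
  ∑ j ∈ J, harmExt (A j) (B j) (u j) z

lemma notMem_slits : z ∉ slits A B J ↔ ∀ j ∈ J, z ∉ slit (A j) (B j) := by
  simp [slits]

lemma slits_mono {K : Finset ι} (h : J ⊆ K) : slits A B J ⊆ slits A B K :=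
  biUnion_subset_biUnion_left h

lemma slits_eq_ofReal_image (A B : ι → ℝ) (J : Finset ι) :
    slits A B J = Complex.ofReal '' ⋃ j ∈ J, Icc (A j) (B j) := by
  simp only [slits, slit, image_iUnion]

lemma isCompact_slits (A B : ι → ℝ) (J : Finset ι) : IsCompact (slits A B J) :=
  J.isCompact_biUnion fun j _ => isCompact_slit (A j) (B j)

lemma isOpen_compl_slits (A B : ι → ℝ) (J : Finset ι) : IsOpen (slits A B J)ᶜ :=
  (isCompact_slits A B J).isClosed.isOpen_compl

lemma isPreconnected_compl_slits (A B : ι → ℝ) (J : Finset ι) :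
    IsPreconnected (slits A B J)ᶜ := by
  rw [slits_eq_ofReal_image]
  exact isPreconnected_compl_ofReal_image (J.isCompact_biUnion fun _ _ => isCompact_Icc).ne_univ

lemma nhdsWithin_compl_slits_neBot (A B : ι → ℝ) (J : Finset ι) (x : ℝ) :
    (𝓝[(slits A B J)ᶜ] (x : ℂ)).NeBot := by
  rw [slits_eq_ofReal_image]
  exact nhdsWithin_compl_ofReal_image_neBot _ x

lemma multiExt_eq_re (A B : ι → ℝ) (J : Finset ι) (u : ι → ℝ → ℝ) (z : ℂ) :
    multiExt A B J u z = (∑ j ∈ J, schwarzIntegral (A j) (B j) (u j) z).re :=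
  (Complex.re_sum _ _).symm

lemma multiExt_congr (huv : ∀ j, u j =ᵐ[arcsineMeasure (A j) (B j)] v j) (J : Finset ι) (z : ℂ) :
    multiExt A B J u z = multiExt A B J v z :=
  Finset.sum_congr rfl fun j _ => harmExt_congr (huv j) z

lemma multiExt_smul (A B : ι → ℝ) (J : Finset ι) (c : ℝ) (u : ι → ℝ → ℝ) (z : ℂ) :
    multiExt A B J (c • u) z = c * multiExt A B J u z := by
  simp only [multiExt, Pi.smul_apply, harmExt_smul, Finset.mul_sum]

lemma isBoundedUnder_multiExt (hAB : ∀ i, A i < B i)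
    (hf : ∀ i, Integrable (f i) (arcsineMeasure (A i) (B i))) (J : Finset ι) :
    (Bornology.cobounded ℂ).IsBoundedUnder (· ≤ ·) (multiExt A B J f) := by
  choose C hC using fun j => isBoundedUnder_norm_schwarzIntegral (hAB j) (hf j)
  refine isBoundedUnder_of_eventually_le (a := ∑ j ∈ J, C j) ?_
  filter_upwards [(Finset.eventually_all J).2 fun j _ => eventually_map.1 (hC j)] with z hz
  exact Finset.sum_le_sum fun j hj => (Complex.re_le_norm _).trans (hz j hj)

variable (hAB : ∀ i, A i < B i)

include hAB

lemma multiExt_add (hu : ∀ i, Integrable (u i) (arcsineMeasure (A i) (B i)))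
    (hv : ∀ i, Integrable (v i) (arcsineMeasure (A i) (B i))) (hz : z ∉ slits A B J) :
    multiExt A B J (u + v) z = multiExt A B J u z + multiExt A B J v z := by
  rw [multiExt, multiExt, multiExt, ← Finset.sum_add_distrib]
  exact Finset.sum_congr rfl fun j hj => harmExt_add (hAB j) (hu j) (hv j) (notMem_slits.1 hz j hj)

lemma multiExt_sub (hu : ∀ i, Integrable (u i) (arcsineMeasure (A i) (B i)))
    (hv : ∀ i, Integrable (v i) (arcsineMeasure (A i) (B i))) (hz : z ∉ slits A B J) :
    multiExt A B J (u - v) z = multiExt A B J u z - multiExt A B J v z := by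
  rw [multiExt, multiExt, multiExt, ← Finset.sum_sub_distrib]
  exact Finset.sum_congr rfl fun j hj => harmExt_sub (hAB j) (hu j) (hv j) (notMem_slits.1 hz j hj)

lemma multiExt_eq_posPart_sub_negPart
    (hu : ∀ i, Integrable (u i) (arcsineMeasure (A i) (B i))) (hz : z ∉ slits A B J) :
    multiExt A B J u z = multiExt A B J u⁺ z - multiExt A B J u⁻ z := by
  rw [← multiExt_sub (u := u⁺) (v := u⁻) hAB (fun i => (hu i).pos_part)
    (fun i => (hu i).neg_part) hz, posPart_sub_negPart]

variable (hf : ∀ i, Integrable (f i) (arcsineMeasure (A i) (B i)))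

include hf

lemma abs_multiExt_le {C : ℝ} (hC : ∀ i, ∀ᵐ t ∂arcsineMeasure (A i) (B i), |f i t| ≤ C)
    (hz : z ∉ slits A B J) : |multiExt A B J f z| ≤ J.card * C := by
  rw [← nsmul_eq_mul]
  exact (J.abs_sum_le_sum_abs _).trans <| J.sum_le_card_nsmul _ C fun j hj =>
    abs_harmExt_le (hAB j) (hf j) (hC j) (notMem_slits.1 hz j hj)

omit hf in
lemma eventually_abs_multiExt_sub_lt (hz : z ∉ slits A B J) {ε : ℝ} (hε : 0 < ε) :
    ∀ᶠ y in 𝓝 z, ∀ f : ι → ℝ → ℝ, (∀ i, Integrable (f i) (arcsineMeasure (A i) (B i))) →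
      (∀ i, ∫ t, |f i t| ∂arcsineMeasure (A i) (B i) ≤ 1) →
      |multiExt A B J f y - multiExt A B J f z| < ε := by
  have hη : 0 < ε / (J.card + 1) := by positivity
  filter_upwards [(Finset.eventually_all J).2 fun j hj =>
    eventually_abs_harmExt_sub_le (hAB j) (notMem_slits.1 hz j hj) hη] with y hy f hf hf1
  have hterm : ∀ j ∈ J, |harmExt (A j) (B j) (f j) y - harmExt (A j) (B j) (f j) z| ≤
      ε / (J.card + 1) := fun j hj =>
    (hy j hj (f j) (hf j)).trans (mul_le_of_le_one_left hη.le (hf1 j))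
  rw [multiExt, multiExt, ← Finset.sum_sub_distrib]
  calc |∑ j ∈ J, (harmExt (A j) (B j) (f j) y - harmExt (A j) (B j) (f j) z)|
      ≤ J.card • (ε / (J.card + 1)) :=
        (J.abs_sum_le_sum_abs _).trans (J.sum_le_card_nsmul _ _ hterm)
    _ < (J.card + 1) * (ε / (J.card + 1)) := by rw [nsmul_eq_mul]; gcongr; linarith
    _ = ε := by field_simp

lemma multiExt_nonneg (h0 : 0 ≤ f) (hz : z ∉ slits A B J) : 0 ≤ multiExt A B J f z :=
  Finset.sum_nonneg fun j hj =>
    harmExt_nonneg (hAB j) (hf j) (ae_of_all _ (h0 j)) (notMem_slits.1 hz j hj)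

lemma continuousAt_multiExt (hz : z ∉ slits A B J) : ContinuousAt (multiExt A B J f) z :=
  tendsto_finsetSum J fun j hj => continuousAt_harmExt (hAB j) (hf j) (notMem_slits.1 hz j hj)

lemma differentiableOn_sum_schwarzIntegral (J : Finset ι) :
    DifferentiableOn ℂ (fun z => ∑ j ∈ J, schwarzIntegral (A j) (B j) (f j) z) (slits A B J)ᶜ :=
  DifferentiableOn.fun_sum fun j hj => (differentiableOn_schwarzIntegral (hAB j) (hf j)).mono
    fun _ hz => notMem_slits.1 hz j hj

end SlitSystem

section Disjoint

variable {ι : Type*} [Fintype ι] [DecidableEq ι] {A B : ι → ℝ} {f u θ : ι → ℝ → ℝ}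

lemma ofReal_notMem_slits_erase
    (hdisj : ∀ i j, i ≠ j → Disjoint (Icc (A i) (B i)) (Icc (A j) (B j))) {k : ι} {x : ℝ}
    (hx : x ∈ Icc (A k) (B k)) : (x : ℂ) ∉ slits A B (Finset.univ.erase k) :=
  notMem_slits.2 fun j hj h =>
    (hdisj j k (Finset.ne_of_mem_erase hj)).notMem_of_mem_left (ofReal_mem_slit.1 h) hx

lemma harmExt_add_multiExt_erase (A B : ι → ℝ) (f : ι → ℝ → ℝ) (k : ι) (z : ℂ) :
    harmExt (A k) (B k) (f k) z + multiExt A B (Finset.univ.erase k) f z =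
      multiExt A B Finset.univ f z :=
  Finset.add_sum_erase _ (fun j => harmExt (A j) (B j) (f j) z) (Finset.mem_univ k)

variable (hAB : ∀ i, A i < B i)
  (hdisj : ∀ i j, i ≠ j → Disjoint (Icc (A i) (B i)) (Icc (A j) (B j)))
  (hf : ∀ i, Integrable (f i) (arcsineMeasure (A i) (B i)))

include hAB hdisj hf

lemma continuousOn_multiExt_erase (k : ι) :
    ContinuousOn (fun x : ℝ => multiExt A B (Finset.univ.erase k) f x) (Icc (A k) (B k)) :=
  fun _ hx => ((continuousAt_multiExt hAB hf (ofReal_notMem_slits_erase hdisj hx)).comp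
    Complex.continuous_ofReal.continuousAt).continuousWithinAt

lemma eventually_multiExt_lt {k : ι} {c : ℝ → ℝ} {x L : ℝ} (hx : x ∈ Icc (A k) (B k))
    (hfc : f k ≤ᵐ[arcsineMeasure (A k) (B k)] c)
    (hc : ContinuousWithinAt c (Icc (A k) (B k)) x)
    (hL : c x + multiExt A B (Finset.univ.erase k) f x < L) :
    ∀ᶠ z in 𝓝[(slits A B Finset.univ)ᶜ] (x : ℂ), multiExt A B Finset.univ f z < L := by
  obtain ⟨L₁, hL₁, hL₁'⟩ := exists_between (lt_sub_iff_add_lt.2 hL)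
  have hslit : (slits A B Finset.univ)ᶜ ⊆ (slit (A k) (B k))ᶜ := fun z hz =>
    notMem_slits.1 hz k (Finset.mem_univ k)
  have hrest :=
    (continuousAt_multiExt hAB hf (ofReal_notMem_slits_erase hdisj hx)).eventually_lt_const
      (lt_sub_comm.1 hL₁')
  filter_upwards [(eventually_harmExt_lt (hAB k) hx (hf k) hfc hc hL₁).filter_mono
    (nhdsWithin_mono _ hslit), hrest.filter_mono nhdsWithin_le_nhds] with z h₁ h₂
  rw [← harmExt_add_multiExt_erase A B f k]
  linarith

lemma multiExt_univ_le [Nonempty ι] {M : ℝ}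
    (hM : ∀ k, ∀ᵐ t ∂arcsineMeasure (A k) (B k),
      f k t ≤ M - multiExt A B (Finset.univ.erase k) f t)
    {z : ℂ} (hz : z ∉ slits A B Finset.univ) : multiExt A B Finset.univ f z ≤ M := by
  obtain ⟨k₀⟩ := ‹Nonempty ι›
  have hne : (slits A B Finset.univ).Nonempty :=
    ⟨A k₀, mem_biUnion (Finset.mem_univ k₀) (ofReal_mem_slit.2 (left_mem_Icc.2 (hAB k₀).le))⟩
  rw [multiExt_eq_re]
  refine re_le_of_eventually_re_lt (isOpen_compl_slits A B Finset.univ)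
    (isPreconnected_compl_slits A B _) (by rw [compl_compl]; exact isCompact_slits A B _)
    (by rwa [compl_compl]) (differentiableOn_sum_schwarzIntegral hAB hf _)
    ?_ (fun x hx M' hM' => ?_) hz
  · simpa only [← multiExt_eq_re] using isBoundedUnder_multiExt hAB hf Finset.univ
  · simp only [← multiExt_eq_re]
    rw [compl_compl, slits, mem_iUnion₂] at hx
    obtain ⟨k, -, t, ht, rfl⟩ := hx
    exact eventually_multiExt_lt hAB hdisj hf ht (hM k)
      (continuousOn_const.sub (continuousOn_multiExt_erase hAB hdisj hf k) t ht)
      (by rwa [sub_add_cancel])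

end Disjoint

section Rigidity

variable {ι : Type*} [Fintype ι] [DecidableEq ι] {A B : ι → ℝ} {f u θ : ι → ℝ → ℝ} {M : ℝ} {i : ι}
  {x : ℝ} (hAB : ∀ i, A i < B i)
  (hdisj : ∀ i j, i ≠ j → Disjoint (Icc (A i) (B i)) (Icc (A j) (B j)))

include hAB hdisj

lemma multiExt_erase_eq_of_max
    (hf : ∀ i, Integrable (f i) (arcsineMeasure (A i) (B i))) (hf0 : 0 ≤ f)
    (htotal : ∀ z ∉ slits A B Finset.univ, multiExt A B Finset.univ f z ≤ M)
    (hrest : ∀ t ∈ Icc (A i) (B i), multiExt A B (Finset.univ.erase i) f t ≤ M)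
    (hx : x ∈ Icc (A i) (B i)) (hxM : multiExt A B (Finset.univ.erase i) f x = M) {z : ℂ}
    (hz : z ∉ slits A B (Finset.univ.erase i)) : multiExt A B (Finset.univ.erase i) f z = M := by
  have hle : ∀ w ∉ slits A B (Finset.univ.erase i), multiExt A B (Finset.univ.erase i) f w ≤ M := by
    intro w hw
    by_cases hwi : w ∈ slit (A i) (B i)
    · obtain ⟨t, ht, rfl⟩ := hwi
      exact hrest t ht
    · have hw' : w ∉ slits A B Finset.univ := by
        rw [notMem_slits] at hw ⊢
        grind
      have hsplit := harmExt_add_multiExt_erase A B f i w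
      linarith [htotal w hw', harmExt_nonneg (hAB i) (hf i) (ae_of_all _ (hf0 i)) hwi]
  rw [← hxM]
  simp only [multiExt_eq_re] at hle hxM ⊢
  exact re_eqOn_of_isPreconnected_of_isMaxOn (isOpen_compl_slits A B _)
    (isPreconnected_compl_slits A B _) (differentiableOn_sum_schwarzIntegral hAB hf _)
    (ofReal_notMem_slits_erase hdisj hx) (fun w hw => (hle w hw).trans hxM.ge) hz

lemma le_multiExt_erase_of_total_eq (hf : ∀ i, Integrable (f i) (arcsineMeasure (A i) (B i)))
    (htotal : ∀ z ∉ slits A B Finset.univ, multiExt A B Finset.univ f z = M)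
    (hhalf : ∀ᵐ t ∂arcsineMeasure (A i) (B i),
      f i t ≤ 1 / 2 * (M - multiExt A B (Finset.univ.erase i) f t))
    (hx : x ∈ Icc (A i) (B i)) : M ≤ multiExt A B (Finset.univ.erase i) f x := by
  by_contra! hlt
  have hcont := (continuousOn_const (c := (1 / 2 : ℝ))).mul
    (continuousOn_const (c := M) |>.sub (continuousOn_multiExt_erase hAB hdisj hf i)) x hx
  have := nhdsWithin_compl_slits_neBot A B Finset.univ x
  obtain ⟨z, hzlt, hz⟩ := ((eventually_multiExt_lt hAB hdisj hf hx hhalf hcont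
    (L := M) (by linarith)).and self_mem_nhdsWithin).exists
  exact hzlt.ne (htotal z hz)

/-- At a maximum of the rest potential the strong maximum principle freezes the total potential;
the factor `1 / 2` then pushes the equality `rest = M` to every other interval, where it kills
`f`. -/
lemma eq_zero_of_multiExt_erase_eq_max
    (hf : ∀ i, Integrable (f i) (arcsineMeasure (A i) (B i))) (hf0 : 0 ≤ f)
    (hrest : ∀ k, ∀ t ∈ Icc (A k) (B k), multiExt A B (Finset.univ.erase k) f t ≤ M)
    (hhalf : ∀ k, ∀ᵐ t ∂arcsineMeasure (A k) (B k),
      f k t ≤ 1 / 2 * (M - multiExt A B (Finset.univ.erase k) f t))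
    (hx : x ∈ Icc (A i) (B i)) (hxM : multiExt A B (Finset.univ.erase i) f x = M) : M = 0 := by
  have : Nonempty ι := ⟨i⟩
  have htotal_le : ∀ z ∉ slits A B Finset.univ, multiExt A B Finset.univ f z ≤ M := fun z hz =>
    multiExt_univ_le hAB hdisj hf (fun k => by
      filter_upwards [hhalf k, ae_mem_Icc_arcsineMeasure (A k) (B k)] with t h ht
      linarith [hrest k t ht]) hz
  have htotal : ∀ z ∉ slits A B Finset.univ, multiExt A B Finset.univ f z = M := fun z hz => by
    have hfrozen := multiExt_erase_eq_of_max hAB hdisj hf hf0 htotal_le (hrest i) hx hxM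
      (notMem_subset (slits_mono (Finset.erase_subset i _)) hz)
    have hi := harmExt_nonneg (hAB i) (hf i) (ae_of_all _ (hf0 i))
      (notMem_slits.1 hz i (Finset.mem_univ i))
    linarith [htotal_le z hz, harmExt_add_multiExt_erase A B f i z]
  have hzero : ∀ l, f l =ᵐ[arcsineMeasure (A l) (B l)] fun _ => 0 := fun l => by
    filter_upwards [hhalf l, ae_mem_Icc_arcsineMeasure (A l) (B l)] with t h ht
    have h0 : 0 ≤ f l t := hf0 l t
    linarith [le_multiExt_erase_of_total_eq hAB hdisj hf htotal (hhalf l) ht]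
  rw [← hxM, multiExt_congr hzero]
  exact Finset.sum_eq_zero fun l hl =>
    harmExt_const (hAB l) 0 (notMem_slits.1 (ofReal_notMem_slits_erase hdisj hx) l hl)

lemma exists_isMax_multiExt_erase [Nonempty ι] {n : ι → ℝ → ℝ}
    (hf : ∀ i, Integrable (f i) (arcsineMeasure (A i) (B i)))
    (hn : ∀ i, Integrable (n i) (arcsineMeasure (A i) (B i))) :
    ∃ i, ∃ x ∈ Icc (A i) (B i), ∀ k, ∀ t ∈ Icc (A k) (B k),
      max (multiExt A B (Finset.univ.erase k) f t) (multiExt A B (Finset.univ.erase k) n t) ≤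
        max (multiExt A B (Finset.univ.erase i) f x) (multiExt A B (Finset.univ.erase i) n x) := by
  choose y hy hymax using fun k => isCompact_Icc.exists_isMaxOn (nonempty_Icc.2 (hAB k).le)
    ((continuousOn_multiExt_erase hAB hdisj hf k).sup (continuousOn_multiExt_erase hAB hdisj hn k))
  obtain ⟨i, -, hi⟩ := Finset.exists_max_image Finset.univ (fun k =>
    max (multiExt A B (Finset.univ.erase k) f (y k)) (multiExt A B (Finset.univ.erase k) n (y k)))
    Finset.univ_nonempty
  exact ⟨i, y i, hy i, fun k t ht => (hymax k ht).trans (hi k (Finset.mem_univ k))⟩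

lemma posPart_le_of_eq_neg_half_mul (hu : ∀ i, Integrable (u i) (arcsineMeasure (A i) (B i)))
    (hθ : ∀ i t, θ i t ∈ Icc 0 1) {k : ι}
    (heq : ∀ᵐ t ∂arcsineMeasure (A k) (B k),
      u k t = -(1 / 2) * (θ k t * multiExt A B (Finset.univ.erase k) u t))
    (hpos : ∀ t ∈ Icc (A k) (B k), multiExt A B (Finset.univ.erase k) u⁺ t ≤ M)
    (hneg : ∀ t ∈ Icc (A k) (B k), multiExt A B (Finset.univ.erase k) u⁻ t ≤ M) :
    ∀ᵐ t ∂arcsineMeasure (A k) (B k),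
      u⁺ k t ≤ 1 / 2 * (M - multiExt A B (Finset.univ.erase k) u⁺ t) := by
  filter_upwards [heq, ae_mem_Icc_arcsineMeasure (A k) (B k)] with t h ht
  rw [multiExt_eq_posPart_sub_negPart hAB hu (ofReal_notMem_slits_erase hdisj ht)] at h
  have hP := hpos t ht
  have hN := hneg t ht
  obtain ⟨hθ0, hθ1⟩ := hθ k t
  rw [Pi.posPart_apply, Pi.posPart_apply, posPart_def, h]
  refine max_le ?_ (by linarith)
  nlinarith [mul_nonneg hθ0 (sub_nonneg.2 hN), mul_nonneg (sub_nonneg.2 hθ1) (sub_nonneg.2 hP)]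

lemma negPart_le_of_eq_neg_half_mul (hu : ∀ i, Integrable (u i) (arcsineMeasure (A i) (B i)))
    (hθ : ∀ i t, θ i t ∈ Icc 0 1) {k : ι}
    (heq : ∀ᵐ t ∂arcsineMeasure (A k) (B k),
      u k t = -(1 / 2) * (θ k t * multiExt A B (Finset.univ.erase k) u t))
    (hpos : ∀ t ∈ Icc (A k) (B k), multiExt A B (Finset.univ.erase k) u⁺ t ≤ M)
    (hneg : ∀ t ∈ Icc (A k) (B k), multiExt A B (Finset.univ.erase k) u⁻ t ≤ M) :
    ∀ᵐ t ∂arcsineMeasure (A k) (B k),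
      u⁻ k t ≤ 1 / 2 * (M - multiExt A B (Finset.univ.erase k) u⁻ t) := by
  rw [← posPart_neg]
  refine posPart_le_of_eq_neg_half_mul (u := -u) hAB hdisj (fun i => (hu i).neg) hθ ?_
    (by rwa [posPart_neg]) (by rwa [negPart_neg])
  filter_upwards [heq] with t h
  rw [Pi.neg_apply, Pi.neg_apply, h, ← neg_one_smul ℝ u, multiExt_smul]
  ring

theorem ae_eq_zero_of_eq_neg_half_mul (hu : ∀ i, Integrable (u i) (arcsineMeasure (A i) (B i)))
    (hθ : ∀ i t, θ i t ∈ Icc 0 1)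
    (heq : ∀ i, ∀ᵐ t ∂arcsineMeasure (A i) (B i),
      u i t = -(1 / 2) * (θ i t * multiExt A B (Finset.univ.erase i) u t)) (k : ι) :
    u k =ᵐ[arcsineMeasure (A k) (B k)] 0 := by
  have : Nonempty ι := ⟨k⟩
  have hupos : ∀ i, Integrable (u⁺ i) (arcsineMeasure (A i) (B i)) := fun i => (hu i).pos_part
  have huneg : ∀ i, Integrable (u⁻ i) (arcsineMeasure (A i) (B i)) := fun i => (hu i).neg_part
  obtain ⟨i, x, hx, hmax⟩ := exists_isMax_multiExt_erase hAB hdisj hupos huneg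
  set M := max (multiExt A B (Finset.univ.erase i) u⁺ x) (multiExt A B (Finset.univ.erase i) u⁻ x)
    with hM
  have hpos : ∀ k, ∀ t ∈ Icc (A k) (B k), multiExt A B (Finset.univ.erase k) u⁺ t ≤ M :=
    fun k t ht => (le_max_left _ _).trans (hmax k t ht)
  have hneg : ∀ k, ∀ t ∈ Icc (A k) (B k), multiExt A B (Finset.univ.erase k) u⁻ t ≤ M :=
    fun k t ht => (le_max_right _ _).trans (hmax k t ht)
  have hM0 : M = 0 := by
    rcases max_choice (multiExt A B (Finset.univ.erase i) u⁺ x)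
      (multiExt A B (Finset.univ.erase i) u⁻ x) with h | h
    · exact eq_zero_of_multiExt_erase_eq_max hAB hdisj hupos (posPart_nonneg u) hpos
        (fun k => posPart_le_of_eq_neg_half_mul hAB hdisj hu hθ (heq k) (hpos k) (hneg k))
        hx (hM.trans h).symm
    · exact eq_zero_of_multiExt_erase_eq_max hAB hdisj huneg (negPart_nonneg u) hneg
        (fun k => negPart_le_of_eq_neg_half_mul hAB hdisj hu hθ (heq k) (hpos k) (hneg k))
        hx (hM.trans h).symm
  filter_upwards [heq k, ae_mem_Icc_arcsineMeasure (A k) (B k)] with t h ht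
  have hz := ofReal_notMem_slits_erase hdisj ht
  have hrest : multiExt A B (Finset.univ.erase k) u t = 0 := by
    rw [multiExt_eq_posPart_sub_negPart hAB hu hz]
    linarith [hpos k t ht, hneg k t ht, multiExt_nonneg hAB hupos (posPart_nonneg u) hz,
      multiExt_nonneg hAB huneg (negPart_nonneg u) hz]
  rw [h, hrest, mul_zero, mul_zero, Pi.zero_apply]

end Rigidity

section Fredholm

lemma isCompactOperator_of_equicontinuous {X Y : Type*} [NormedAddCommGroup X] [NormedSpace ℝ X]
    [TopologicalSpace Y] [CompactSpace Y] (K : X →ₗ[ℝ] BoundedContinuousFunction Y ℝ) {C : ℝ}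
    (hC : ∀ x, ‖x‖ ≤ 1 → ∀ y, |K x y| ≤ C)
    (hequi : Equicontinuous
      ((↑) : K '' Metric.closedBall 0 1 → Y → ℝ)) : IsCompactOperator K := by
  rw [isCompactOperator_iff_exists_mem_nhds_isCompact_closure_image]
  refine ⟨Metric.closedBall 0 1, Metric.closedBall_mem_nhds _ one_pos,
    BoundedContinuousFunction.arzela_ascoli (Metric.closedBall (0 : ℝ) C)
      (isCompact_closedBall _ _) _ ?_ hequi⟩
  rintro _ y ⟨x, hx, rfl⟩
  exact mem_closedBall_zero_iff.2 (hC x (mem_closedBall_zero_iff.1 hx) y)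

lemma exists_eq_map_add_of_isCompactOperator {X : Type*} [NormedAddCommGroup X] [NormedSpace ℝ X]
    [CompleteSpace X] {T : X →ₗ[ℝ] X} (hT : IsCompactOperator T) (hinj : ∀ x, T x = x → x = 0)
    (b : X) : ∃ x, x = T x + b := by
  set T' := ContinuousLinearMap.mkOfIsCompactOperator hT
  have hT' : IsCompactOperator T' := hT
  rcases hT'.hasEigenvalue_or_mem_resolventSet (μ := (1 : ℝ)) one_ne_zero with hE | hR
  · obtain ⟨x, hx⟩ := hE.exists_hasEigenvector
    exact absurd (hinj x (hx.apply_eq_smul.trans (one_smul ℝ x))) hx.2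
  · obtain ⟨V, hV⟩ := spectrum.mem_resolventSet_iff.1 hR
    refine ⟨(↑V⁻¹ : X →L[ℝ] X) b, sub_eq_iff_eq_add'.1 ?_⟩
    have := DFunLike.congr_fun (V.mul_inv) b
    rw [hV, map_one] at this
    exact this

end Fredholm

section DampedExtend

variable {ι : Type*} {A B : ι → ℝ} {θ : ι → ℝ → ℝ} (hAB : ∀ i, A i < B i)

/-- The continuous functions on the disjoint union of the intervals `[A i, B i]`, that is, vectors
of continuous functions on the individual intervals. -/
abbrev VecC (A B : ι → ℝ) : Type _ := BoundedContinuousFunction (Σ i, Icc (A i) (B i)) ℝ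

/-- The functions `-½ θ_j X_j`, with `X_j` extended from `Δ_j` to `ℝ` by constants. -/
def dampedExtend (θ : ι → ℝ → ℝ) (X : VecC A B) (j : ι) (t : ℝ) : ℝ :=
  -(1 / 2) * (θ j t * X ⟨j, projIcc (A j) (B j) (hAB j).le t⟩)

variable (hθm : ∀ i, Measurable (θ i)) (hθ : ∀ i t, θ i t ∈ Icc 0 1)

lemma dampedExtend_add (θ : ι → ℝ → ℝ) (X Z : VecC A B) :
    dampedExtend hAB θ (X + Z) = dampedExtend hAB θ X + dampedExtend hAB θ Z := by
  funext j t
  simp only [dampedExtend, BoundedContinuousFunction.coe_add, Pi.add_apply]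
  ring

lemma dampedExtend_smul (θ : ι → ℝ → ℝ) (c : ℝ) (X : VecC A B) :
    dampedExtend hAB θ (c • X) = c • dampedExtend hAB θ X := by
  funext j t
  simp only [dampedExtend, BoundedContinuousFunction.coe_smul, Pi.smul_apply, smul_eq_mul]
  ring

include hθ in
lemma abs_dampedExtend_le (X : VecC A B) (j : ι) (t : ℝ) : |dampedExtend hAB θ X j t| ≤ ‖X‖ := by
  have hX := X.norm_coe_le_norm ⟨j, projIcc (A j) (B j) (hAB j).le t⟩
  obtain ⟨h0, h1⟩ := hθ j t
  rw [dampedExtend, abs_mul, abs_mul, abs_neg, abs_of_pos one_half_pos, abs_of_nonneg h0]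
  rw [Real.norm_eq_abs] at hX
  nlinarith [abs_nonneg (X ⟨j, projIcc (A j) (B j) (hAB j).le t⟩)]

include hθm hθ in
lemma integrable_dampedExtend (X : VecC A B) (j : ι) :
    Integrable (dampedExtend hAB θ X j) (arcsineMeasure (A j) (B j)) := by
  have hX : Continuous fun t => X ⟨j, projIcc (A j) (B j) (hAB j).le t⟩ :=
    X.continuous.comp (continuous_sigmaMk.comp continuous_projIcc)
  exact Integrable.of_bound
    (((hθm j).aestronglyMeasurable.mul hX.aestronglyMeasurable).const_mul _) ‖X‖
    (ae_of_all _ (abs_dampedExtend_le hAB hθ X j))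

lemma dampedExtend_of_mem (θ : ι → ℝ → ℝ) (X : VecC A B) {j : ι} {t : ℝ}
    (ht : t ∈ Icc (A j) (B j)) :
    dampedExtend hAB θ X j t = -(1 / 2) * (θ j t * X ⟨j, t, ht⟩) := by
  rw [dampedExtend, projIcc_of_mem _ ht]

end DampedExtend

section CrossOperator

variable {ι : Type*} [Fintype ι] [DecidableEq ι] {A B : ι → ℝ} {θ w : ι → ℝ → ℝ}
  (hAB : ∀ i, A i < B i)
  (hdisj : ∀ i j, i ≠ j → Disjoint (Icc (A i) (B i)) (Icc (A j) (B j)))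

/-- The vector `(∑_{j≠i} H_{Δ_j} f_j)_i` of traces on `Δ_i` of the harmonic extensions from the
other intervals. -/
def crossTrace (f : ι → ℝ → ℝ) (hf : ∀ i, Integrable (f i) (arcsineMeasure (A i) (B i))) :
    VecC A B :=
  BoundedContinuousFunction.mkOfCompact
    ⟨fun y => multiExt A B (Finset.univ.erase y.1) f ((y.2 : ℝ) : ℂ),
      continuous_sigma_iff.2 fun i =>
        continuousOn_iff_continuous_domRestrict.1 (continuousOn_multiExt_erase hAB hdisj hf i)⟩

variable (hθm : ∀ i, Measurable (θ i)) (hθ : ∀ i t, θ i t ∈ Icc 0 1)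

lemma crossTrace_apply (f : ι → ℝ → ℝ)
    (hf : ∀ i, Integrable (f i) (arcsineMeasure (A i) (B i))) {i : ι} {t : ℝ}
    (ht : t ∈ Icc (A i) (B i)) :
    crossTrace hAB hdisj f hf ⟨i, t, ht⟩ = multiExt A B (Finset.univ.erase i) f t :=
  rfl

/-- The operator `X ↦ (∑_{j≠i} H_{Δ_j}(-½ θ_j X_j))_i` on vectors of continuous functions. -/
def crossOperator : VecC A B →ₗ[ℝ] VecC A B where
  toFun X := crossTrace hAB hdisj (dampedExtend hAB θ X) (integrable_dampedExtend hAB hθm hθ X)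
  map_add' X Z := by
    ext y
    simp only [crossTrace, dampedExtend_add]
    exact multiExt_add hAB (integrable_dampedExtend hAB hθm hθ X)
      (integrable_dampedExtend hAB hθm hθ Z) (ofReal_notMem_slits_erase hdisj y.2.2)
  map_smul' c X := by
    ext y
    simp only [crossTrace, dampedExtend_smul]
    exact multiExt_smul A B _ c _ _

lemma crossOperator_apply (X : VecC A B) {i : ι} {t : ℝ} (ht : t ∈ Icc (A i) (B i)) :
    crossOperator hAB hdisj hθm hθ X ⟨i, t, ht⟩ =
      multiExt A B (Finset.univ.erase i) (dampedExtend hAB θ X) t :=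
  rfl

lemma equicontinuous_crossOperator :
    Equicontinuous ((↑) : crossOperator hAB hdisj hθm hθ '' Metric.closedBall 0 1 →
      (Σ i, Icc (A i) (B i)) → ℝ) := by
  rintro ⟨i, x, hx⟩
  rw [Metric.equicontinuousAt_iff_right]
  intro ε hε
  rw [Sigma.nhds_mk, eventually_map]
  have hcoe : Continuous fun y : Icc (A i) (B i) => ((y : ℝ) : ℂ) := by fun_prop
  filter_upwards [(hcoe.tendsto ⟨x, hx⟩).eventually
    (eventually_abs_multiExt_sub_lt hAB (ofReal_notMem_slits_erase hdisj hx) hε)] with y hy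
  rintro ⟨_, X, hX, rfl⟩
  rw [dist_comm, Real.dist_eq]
  have hint := integrable_dampedExtend hAB hθm hθ X
  refine hy _ hint fun j => ?_
  have := isProbabilityMeasure_arcsineMeasure (hAB j)
  calc ∫ t, |dampedExtend hAB θ X j t| ∂arcsineMeasure (A j) (B j)
      ≤ ∫ _, 1 ∂arcsineMeasure (A j) (B j) :=
        integral_mono (hint j).abs (integrable_const 1) fun t =>
          (abs_dampedExtend_le hAB hθ X j t).trans (mem_closedBall_zero_iff.1 hX)
    _ = 1 := by simp

lemma isCompactOperator_crossOperator : IsCompactOperator (crossOperator hAB hdisj hθm hθ) := by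
  refine isCompactOperator_of_equicontinuous _ (C := Fintype.card ι) (fun X hX ⟨i, t, ht⟩ => ?_)
    (equicontinuous_crossOperator hAB hdisj hθm hθ)
  refine (abs_multiExt_le hAB (integrable_dampedExtend hAB hθm hθ X) (C := 1)
    (fun j => ae_of_all _ fun t => (abs_dampedExtend_le hAB hθ X j t).trans hX)
    (ofReal_notMem_slits_erase hdisj ht)).trans ?_
  rw [mul_one]
  exact_mod_cast Finset.card_le_univ _

lemma eq_zero_of_crossOperator_eq_self {X : VecC A B}
    (hX : crossOperator hAB hdisj hθm hθ X = X) : X = 0 := by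
  have hzero : ∀ j, dampedExtend hAB θ X j =ᵐ[arcsineMeasure (A j) (B j)] fun _ => 0 :=
    ae_eq_zero_of_eq_neg_half_mul hAB hdisj (integrable_dampedExtend hAB hθm hθ X) hθ fun i => by
      filter_upwards [ae_mem_Icc_arcsineMeasure (A i) (B i)] with t ht
      rw [dampedExtend_of_mem hAB θ X ht, ← crossOperator_apply hAB hdisj hθm hθ X ht, hX]
  ext ⟨i, t, ht⟩
  rw [← hX, crossOperator_apply, multiExt_congr hzero]
  exact Finset.sum_eq_zero fun j hj =>
    harmExt_const (hAB j) 0 (notMem_slits.1 (ofReal_notMem_slits_erase hdisj ht) j hj)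

include hAB hdisj hθm hθ in
theorem exists_ae_eq_sub_half_mul_multiExt
    (hw : ∀ i, Integrable (w i) (arcsineMeasure (A i) (B i))) :
    ∃ u : ι → ℝ → ℝ, (∀ i, Integrable (u i) (arcsineMeasure (A i) (B i))) ∧
      ∀ i, ∀ᵐ t ∂arcsineMeasure (A i) (B i),
        u i t = w i t - 1 / 2 * (θ i t * multiExt A B (Finset.univ.erase i) u t) := by
  obtain ⟨X, hX⟩ := exists_eq_map_add_of_isCompactOperator
    (isCompactOperator_crossOperator hAB hdisj hθm hθ)
    (fun _ => eq_zero_of_crossOperator_eq_self hAB hdisj hθm hθ) (crossTrace hAB hdisj w hw)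
  have hint := integrable_dampedExtend hAB hθm hθ X
  refine ⟨dampedExtend hAB θ X + w, fun i => (hint i).add (hw i), fun i => ?_⟩
  filter_upwards [ae_mem_Icc_arcsineMeasure (A i) (B i)] with t ht
  have hrest : multiExt A B (Finset.univ.erase i) (dampedExtend hAB θ X + w) t = X ⟨i, t, ht⟩ := by
    rw [multiExt_add hAB hint hw (ofReal_notMem_slits_erase hdisj ht)]
    rw [← crossOperator_apply hAB hdisj hθm hθ X ht, ← crossTrace_apply hAB hdisj w hw ht,
      ← BoundedContinuousFunction.add_apply, ← hX]
  rw [hrest, Pi.add_apply, Pi.add_apply, dampedExtend_of_mem hAB θ X ht]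
  ring

end CrossOperator

/-! ### Szegő vectors -/

section Density

variable {μ : Measure ℝ} {a b : ℝ}

lemma measurable_vDens (μ : Measure ℝ) (a b : ℝ) : Measurable (vDens μ a b) := by
  have hderiv : Measurable (lebDeriv μ) := (Measure.measurable_rnDeriv μ volume).ennreal_toReal
  unfold vDens
  fun_prop

lemma vDens_nonneg (μ : Measure ℝ) (a b x : ℝ) : 0 ≤ vDens μ a b x := by
  unfold vDens lebDeriv
  positivity

lemma abs_log_vDens_le (μ : Measure ℝ) (a b x : ℝ) :
    |Real.log (vDens μ a b x)| ≤
      |Real.log π| + |Real.log (lebDeriv μ x)| + |Real.log ((x - a) * (b - x))| / 2 := by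
  by_cases hv : vDens μ a b x = 0
  · rw [hv, Real.log_zero, abs_zero]
    positivity
  · obtain ⟨hπμ, hsqrt⟩ := mul_ne_zero_iff.1 hv
    have hquad : 0 ≤ (x - a) * (b - x) := (Real.sqrt_ne_zero'.1 hsqrt).le
    rw [vDens, Real.log_mul hπμ hsqrt, Real.log_mul Real.pi_ne_zero (mul_ne_zero_iff.1 hπμ).2,
      Real.log_sqrt hquad]
    refine (abs_add_three (Real.log π) (Real.log (lebDeriv μ x)) _).trans_eq ?_
    rw [abs_div, abs_two]

lemma integrable_log_vDens (hab : a < b) (hS : SzCond μ a b) :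
    Integrable (fun x => Real.log (vDens μ a b x)) (arcsineMeasure a b) :=
  (((integrable_const |Real.log π|).add hS.abs).add
    ((integrable_log_sub_mul_sub hab).abs.div_const 2)).mono'
    (Real.measurable_log.comp (measurable_vDens μ a b)).aestronglyMeasurable
    (ae_of_all _ fun x => abs_log_vDens_le μ a b x)

end Density

section SzegoVector

variable {d : ℕ} {A B : Fin d → ℝ} {v g g' : Fin d → ℝ → ℝ} {S S' : Fin d → ℂ → ℂ}
  (hAB : ∀ i, A i < B i)
  (hdisj : ∀ i j, i ≠ j → Disjoint (Icc (A i) (B i)) (Icc (A j) (B j)))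

include hAB hdisj

lemma prod_re_OmegaFun_ofReal (g : Fin d → ℝ → ℝ) {i : Fin d} {x : ℝ}
    (hx : x ∈ Icc (A i) (B i)) :
    ∏ j ∈ Finset.univ.erase i, (OmegaFun (A j) (B j) (g j) x).re =
      Real.exp (multiExt A B (Finset.univ.erase i) (fun j t => Real.log (g j t)) x) := by
  rw [multiExt, Real.exp_sum]
  refine Finset.prod_congr rfl fun j hj => ?_
  have hxj := notMem_slits.1 (ofReal_notMem_slits_erase hdisj hx) j hj
  rw [OmegaFun_ofReal (hAB j) (mt ofReal_mem_slit.2 hxj), Complex.ofReal_re]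

/-- The indicator of `{v ≠ 0}` makes the equation hold where `v = 0` too, as `Real.log 0 = 0`. -/
lemma IsSzegoVector.log_ae_eq (h : IsSzegoVector d A B v g S) (i : Fin d) :
    ∀ᵐ t ∂arcsineMeasure (A i) (B i), Real.log (g i t) =
      {s | v i s ≠ 0}.indicator 1 t * (1 / 2 * Real.log (v i t) -
        1 / 2 * multiExt A B (Finset.univ.erase i) (fun j s => Real.log (g j s)) t) := by
  obtain ⟨-, -, hS, hbdry⟩ := h
  filter_upwards [hbdry i, ae_mem_Icc_arcsineMeasure (A i) (B i)] with t ht htmem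
  simp only [hS] at ht
  rw [prod_re_OmegaFun_ofReal hAB hdisj g htmem] at ht
  by_cases hv : v i t = 0
  · have hg : g i t = 0 := by simpa [hv] using ht
    simp [hv, hg]
  · have hg : g i t ^ 2 ≠ 0 := fun h0 => hv (by rw [← ht, h0, zero_mul])
    rw [indicator_of_mem (by exact hv), ← ht, Real.log_mul hg (Real.exp_pos _).ne', Real.log_pow,
      Real.log_exp, Pi.one_apply]
    push_cast
    ring

lemma IsSzegoVector.log_ae_eq_log (h : IsSzegoVector d A B v g S)
    (h' : IsSzegoVector d A B v g' S') (i : Fin d) :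
    (fun t => Real.log (g i t)) =ᵐ[arcsineMeasure (A i) (B i)] fun t => Real.log (g' i t) := by
  set u : Fin d → ℝ → ℝ := fun i t => Real.log (g i t)
  set u' : Fin d → ℝ → ℝ := fun i t => Real.log (g' i t)
  have hu : ∀ i, Integrable (u i) (arcsineMeasure (A i) (B i)) := h.2.1
  have hu' : ∀ i, Integrable (u' i) (arcsineMeasure (A i) (B i)) := h'.2.1
  refine eventuallyEq_iff_sub.2 (ae_eq_zero_of_eq_neg_half_mul (u := u - u')
    (θ := fun i => {s | v i s ≠ 0}.indicator 1) hAB hdisj (fun i => (hu i).sub (hu' i))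
    (fun i t => ?_) (fun i => ?_) i)
  · by_cases hv : v i t = 0 <;> simp [hv]
  · filter_upwards [h.log_ae_eq hAB hdisj i, h'.log_ae_eq hAB hdisj i,
      ae_mem_Icc_arcsineMeasure (A i) (B i)] with t hg hg' ht
    rw [multiExt_sub hAB hu hu' (ofReal_notMem_slits_erase hdisj ht), Pi.sub_apply, Pi.sub_apply]
    linear_combination hg - hg'

theorem IsSzegoVector.unique (h : IsSzegoVector d A B v g S) (h' : IsSzegoVector d A B v g' S') :
    S = S' := by
  funext i z
  simp only [h.2.2.1 i, h'.2.2.1 i, OmegaFun_eq_exp,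
    schwarzIntegral_congr (h.log_ae_eq_log hAB hdisj h' i)]

lemma isSzegoVector_of_log_ae_eq (hg : ∀ i t, 0 ≤ g i t)
    (hgi : ∀ i, Integrable (fun t => Real.log (g i t)) (arcsineMeasure (A i) (B i)))
    (hv : ∀ i t, 0 ≤ v i t) (hgv : ∀ i t, g i t = 0 ↔ v i t = 0)
    (hlog : ∀ i, ∀ᵐ t ∂arcsineMeasure (A i) (B i), v i t ≠ 0 → 2 * Real.log (g i t) +
      multiExt A B (Finset.univ.erase i) (fun j s => Real.log (g j s)) t = Real.log (v i t)) :
    IsSzegoVector d A B v g fun i => OmegaFun (A i) (B i) (g i) := by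
  refine ⟨hg, hgi, fun _ => rfl, fun i => ?_⟩
  filter_upwards [hlog i, ae_mem_Icc_arcsineMeasure (A i) (B i)] with t hlogt ht
  rw [prod_re_OmegaFun_ofReal hAB hdisj g ht]
  by_cases hvt : v i t = 0
  · simp [hvt, (hgv i t).2 hvt]
  · have hgt : 0 < g i t := (hg i t).lt_of_ne' (mt (hgv i t).1 hvt)
    calc g i t ^ 2 * Real.exp (multiExt A B (Finset.univ.erase i) (fun j s => Real.log (g j s)) t)
        = Real.exp (Real.log (v i t)) := by
          rw [← hlogt hvt, Real.exp_add, two_mul, Real.exp_add, Real.exp_log hgt, sq]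
      _ = v i t := Real.exp_log ((hv i t).lt_of_ne' hvt)

theorem exists_isSzegoVector (hvm : ∀ i, Measurable (v i)) (hv : ∀ i t, 0 ≤ v i t)
    (hvi : ∀ i, Integrable (fun t => Real.log (v i t)) (arcsineMeasure (A i) (B i))) :
    ∃ g S, IsSzegoVector d A B v g S := by
  obtain ⟨u, hu, hfix⟩ := exists_ae_eq_sub_half_mul_multiExt hAB hdisj
    (θ := fun i => {s | v i s ≠ 0}.indicator 1) (w := fun i t => 1 / 2 * Real.log (v i t))
    (fun i => measurable_one.indicator (hvm i (measurableSet_singleton 0).compl))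
    (fun i t => by by_cases hvt : v i t = 0 <;> simp [hvt]) (fun i => (hvi i).const_mul _)
  let g : Fin d → ℝ → ℝ := fun i => {s | v i s ≠ 0}.indicator fun t => Real.exp (u i t)
  have hg (i t) : v i t ≠ 0 → g i t = Real.exp (u i t) := fun hvt => indicator_of_mem hvt _
  have hg0 (i t) : v i t = 0 → g i t = 0 := fun hvt => indicator_of_notMem (by simp [hvt]) _
  have hlog (i) : (fun t => Real.log (g i t)) =ᵐ[arcsineMeasure (A i) (B i)] u i := by
    filter_upwards [hfix i] with t ht
    by_cases hvt : v i t = 0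
    · rw [hg0 i t hvt, ht]
      simp [hvt]
    · rw [hg i t hvt, Real.log_exp]
  refine ⟨g, _, isSzegoVector_of_log_ae_eq hAB hdisj
    (fun i t => indicator_nonneg (fun _ _ => (Real.exp_pos _).le) t)
    (fun i => (hu i).congr (hlog i).symm) hv
    (fun i t => ⟨fun h0 => ?_, hg0 i t⟩) fun i => ?_⟩
  · by_contra hvt
    exact (Real.exp_pos _).ne' ((hg i t hvt).symm.trans h0)
  · filter_upwards [hfix i, hlog i] with t ht hlogt hvt
    rw [indicator_of_mem (by exact hvt), Pi.one_apply] at ht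
    rw [multiExt_congr hlog, hlogt, ht]
    ring

theorem szego_vector_exists_unique_general (hvm : ∀ i, Measurable (v i)) (hv : ∀ i t, 0 ≤ v i t)
    (hvi : ∀ i, Integrable (fun t => Real.log (v i t)) (arcsineMeasure (A i) (B i))) :
    ∃! S, ∃ g, IsSzegoVector d A B v g S := by
  obtain ⟨g, S, h⟩ := exists_isSzegoVector hAB hdisj hvm hv hvi
  exact ⟨S, ⟨g, h⟩, fun S' ⟨g', h'⟩ => h'.unique hAB hdisj h⟩

end SzegoVector

/-- Proposition 3.1: existence and uniqueness of the vector of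
conjugate-symmetric outer Szegő functions `(S_1,…,S_d)`, positive at infinity, satisfying
`|S_{i±}(x)|² ∏_{j≠i} S_j(x) = v_{Δ_i}(x)` a.e. on `Δ_i` for each `i`. -/
theorem szego_vector_exists_unique
    (d : ℕ) (hd : 1 ≤ d) (A B : Fin d → ℝ) (hAB : ∀ i, A i < B i)
    (hdisj : ∀ i j, i ≠ j → Disjoint (Set.Icc (A i) (B i)) (Set.Icc (A j) (B j)))
    (μ : Fin d → Measure ℝ)
    (hfin : ∀ i, IsFiniteMeasure (μ i))
    (hbdd : ∀ i, Bornology.IsBounded (msupp (μ i)))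
    (hsub : ∀ i, Set.Icc (A i) (B i) ⊆ convHullSupp (μ i))
    (hSz : ∀ i, SzCond (μ i) (A i) (B i)) :
    ∃ (S : Fin d → ℂ → ℂ) (g : Fin d → ℝ → ℝ),
      IsSzegoVector d A B (fun i => vDens (μ i) (A i) (B i)) g S ∧
      ∀ (S' : Fin d → ℂ → ℂ) (g' : Fin d → ℝ → ℝ),
        IsSzegoVector d A B (fun i => vDens (μ i) (A i) (B i)) g' S' →
        ∀ i, Set.EqOn (S i) (S' i) (Complex.ofReal '' Set.Icc (A i) (B i))ᶜ := by
  obtain ⟨S, ⟨g, h⟩, huniq⟩ := szego_vector_exists_unique_general hAB hdisj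
    (fun i => measurable_vDens (μ i) (A i) (B i)) (fun i => vDens_nonneg (μ i) (A i) (B i))
    (fun i => integrable_log_vDens (hAB i) (hSz i))
  exact ⟨S, g, h, fun S' g' h' i z _ => by rw [huniq S' ⟨g', h'⟩]⟩

end
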